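/- arXiv:2505.07795 — 4 statements merged into one kernel-verified Lean document; each statement's English description precedes it below -/
import Mathlib

section
/- Let D ≥ 1 and k ≥ 1 be integers, let μ be the normalized Haar probability measure on the unitary group U(D), and let e₁ be a fixed unit vector of ℂ^D. Then the k-th moment of the Haar random pure state ensemble equals the normalized sum of permutation operators: ∫_{U(D)} (U |e₁⟩⟨e₁| U†)^{⊗k} dμ(U) = ((D−1)!/(D+k−1)!) Σ_{g ∈ S_k} P_D(g). -/
open Matrix MeasureTheory

/-- The Borel σ-algebra on matrices. -/
noncomputable instance matrixMeasurableSpace {m n : Type*} :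
    MeasurableSpace (Matrix m n ℂ) := borel _

/-- The permutation operator `P_D(g)` on `(ℂ^D)^{⊗k}`, defined on the standard tensor basis by
`P_D(g) |i_1,…,i_k⟩ = |i_{g(1)},…,i_{g(k)}⟩`. -/
def permMatrix (D : ℕ) {k : ℕ} (g : Equiv.Perm (Fin k)) :
    Matrix (Fin k → Fin D) (Fin k → Fin D) ℂ :=
  fun r c => if r = fun a => c (g a) then 1 else 0

/-- The `k`-fold tensor power `M^{⊗k}` of a `D × D` matrix. -/
def tensorPow {D k : ℕ} (M : Matrix (Fin D) (Fin D) ℂ) :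
    Matrix (Fin k → Fin D) (Fin k → Fin D) ℂ :=
  fun r c => ∏ a, M (r a) (c a)

section HaarProof

/-- The random state `U e`. -/
def hw {D : ℕ} (e : Fin D → ℂ) (U : Matrix.unitaryGroup (Fin D) ℂ) : Fin D → ℂ :=
  (U : Matrix (Fin D) (Fin D) ℂ) *ᵥ e

/-- `U e` on the left slots, its conjugate on the right slots. -/
def hslot {D k : ℕ} (w : Fin D → ℂ) (i : Fin k ⊕ Fin k) : Fin D → ℂ :=
  Sum.elim (fun _ => w) (fun _ => star w) i

lemma hw_norm {D : ℕ} (e : Fin D → ℂ) (he : star e ⬝ᵥ e = 1)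
    (U : Matrix.unitaryGroup (Fin D) ℂ) : star (hw e U) ⬝ᵥ hw e U = 1 := by
  have hU : star (U : Matrix (Fin D) (Fin D) ℂ) * U = 1 := Unitary.coe_star_mul_self U
  rw [hw, star_mulVec, ← dotProduct_mulVec, mulVec_mulVec, ← star_eq_conjTranspose, hU,
    one_mulVec, he]

lemma hw_entry {D : ℕ} (e : Fin D → ℂ) (he : star e ⬝ᵥ e = 1)
    (U : Matrix.unitaryGroup (Fin D) ℂ) (l : Fin D) : ‖hw e U l‖ ≤ 1 := by
  have h := hw_norm e he U
  have h2 : ∑ l, ‖hw e U l‖ ^ 2 = 1 := by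
    have : ((∑ l, ‖hw e U l‖ ^ 2 : ℝ) : ℂ) = 1 := by
      rw [← h]
      simp only [dotProduct, Pi.star_apply, Complex.ofReal_sum, Complex.ofReal_pow]
      refine Finset.sum_congr rfl fun l _ => ?_
      exact (Complex.conj_mul' _).symm
    exact_mod_cast this
  have h3 : ‖hw e U l‖ ^ 2 ≤ 1 := by
    rw [← h2]
    exact Finset.single_le_sum (f := fun l => ‖hw e U l‖ ^ 2)
      (fun i _ => by positivity) (Finset.mem_univ l)
  exact (sq_le_one_iff₀ (norm_nonneg _)).1 h3

lemma hslot_entry {D k : ℕ} (w : Fin D → ℂ) (hw : ∀ l, ‖w l‖ ≤ 1) (i : Fin k ⊕ Fin k)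
    (l : Fin D) : ‖hslot w i l‖ ≤ 1 := by
  rcases i with i | i <;> simp [hslot, hw]

lemma hw_cont {D : ℕ} (e : Fin D → ℂ) : Continuous (hw e) := by
  unfold hw
  fun_prop

/-- The integrand as multilinear map. -/
noncomputable def hM {D k : ℕ} (w : Fin D → ℂ) :
    MultilinearMap ℂ (fun _ : Fin k ⊕ Fin k => Fin D → ℂ) ℂ :=
  (MultilinearMap.mkPiAlgebra ℂ (Fin k ⊕ Fin k) ℂ).compLinearMap
    (fun i => dotProductBilin ℂ ℂ (hslot w i))

lemma hM_apply {D k : ℕ} (w : Fin D → ℂ) (z : Fin k ⊕ Fin k → Fin D → ℂ) :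
    hM w z = ∏ i, hslot w i ⬝ᵥ z i := by
  simp [hM]

lemma hM_bound {D k : ℕ} (w : Fin D → ℂ) (hw : ∀ l, ‖w l‖ ≤ 1)
    (z : Fin k ⊕ Fin k → Fin D → ℂ) :
    ‖hM w z‖ ≤ (D : ℝ) ^ (Fintype.card (Fin k ⊕ Fin k)) * ∏ i, ‖z i‖ := by
  rw [hM_apply, norm_prod, ← Finset.card_univ, ← Finset.prod_const, ← Finset.prod_mul_distrib]
  refine Finset.prod_le_prod (fun _ _ => norm_nonneg _) fun i _ => ?_
  refine (norm_sum_le _ _).trans ?_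
  have : (D : ℝ) * ‖z i‖ = ∑ l : Fin D, ‖z i‖ := by simp
  rw [this]
  refine Finset.sum_le_sum fun l _ => ?_
  rw [norm_mul]
  calc _ ≤ 1 * ‖z i‖ := by
        gcongr
        · exact hslot_entry w hw i l
        · exact norm_le_pi_norm (z i) l
    _ = _ := one_mul _

instance hBorel (D : ℕ) : BorelSpace (Matrix (Fin D) (Fin D) ℂ) := ⟨rfl⟩

variable {D : ℕ} (μ : Measure ↥(Matrix.unitaryGroup (Fin D) ℂ)) [IsProbabilityMeasure μ]
  (e : Fin D → ℂ)

lemma hM_cont {k : ℕ} (z : Fin k ⊕ Fin k → Fin D → ℂ) :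
    Continuous (fun U => hM (hw e U) z) := by
  simp only [hM_apply]
  refine continuous_finsetProd _ fun i _ => ?_
  have := hw_cont e
  rcases i with i | i <;> simp only [hslot, Sum.elim_inl, Sum.elim_inr] <;> fun_prop

lemma hM_integrable {k : ℕ} (he : star e ⬝ᵥ e = 1) (z : Fin k ⊕ Fin k → Fin D → ℂ) :
    Integrable (fun U => hM (hw e U) z) μ :=
  Integrable.of_bound (hM_cont e z).aestronglyMeasurable _
    (Filter.Eventually.of_forall fun U => hM_bound _ (hw_entry e he U) z)

/-- The moment functional, as a continuous multilinear map. -/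
noncomputable def hT (k : ℕ) (he : star e ⬝ᵥ e = 1) :
    ContinuousMultilinearMap ℂ (fun _ : Fin k ⊕ Fin k => Fin D → ℂ) ℂ :=
  MultilinearMap.mkContinuous
    { toFun := fun z => ∫ U, hM (hw e U) z ∂μ
      map_update_add' := by
        intro inst z i x y
        simp only [MultilinearMap.map_update_add]
        exact integral_add (hM_integrable μ e he _) (hM_integrable μ e he _)
      map_update_smul' := by
        intro inst z i c x
        simp only [MultilinearMap.map_update_smul]
        exact integral_smul _ _ }
    ((D : ℝ) ^ (Fintype.card (Fin k ⊕ Fin k))) (by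
      intro z
      refine (norm_integral_le_of_norm_le_const (Filter.Eventually.of_forall fun U =>
        hM_bound _ (hw_entry e he U) z)).trans ?_
      simp)

lemma hT_apply {k : ℕ} (he : star e ⬝ᵥ e = 1) (z : Fin k ⊕ Fin k → Fin D → ℂ) :
    hT μ e k he z = ∫ U, hM (hw e U) z ∂μ := rfl

/-- rows of a matrix / its conjugate. -/
def hrow {k : ℕ} (r c : Fin k → Fin D) (A B : Matrix (Fin D) (Fin D) ℂ) :
    Fin k ⊕ Fin k → Fin D → ℂ :=
  Sum.elim (fun a => A (r a)) (fun a => B (c a))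

lemma hM_row {k : ℕ} (r c : Fin k → Fin D) (V U : Matrix.unitaryGroup (Fin D) ℂ) :
    hM (hw e U) (hrow r c (V : Matrix (Fin D) (Fin D) ℂ)
      ((V : Matrix (Fin D) (Fin D) ℂ).map star)) =
    hM (hw e (V * U)) (hrow r c 1 1) := by
  rw [hM_apply, hM_apply]
  refine Finset.prod_congr rfl fun i _ => ?_
  have h : hw e (V * U) = (V : Matrix (Fin D) (Fin D) ℂ) *ᵥ hw e U := by
    simp [hw, mulVec_mulVec]
  rw [h]
  rcases i with a | a
  · simp [hslot, hrow, dotProduct, mulVec, Matrix.one_apply, mul_comm]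
  · simp [hslot, hrow, dotProduct, mulVec, Matrix.one_apply, mul_comm]

lemma hT_inv {k : ℕ} (he : star e ⬝ᵥ e = 1)
    (hμ : ∀ V : ↥(Matrix.unitaryGroup (Fin D) ℂ), μ.map (fun U => V * U) = μ)
    (r c : Fin k → Fin D) (V : Matrix.unitaryGroup (Fin D) ℂ) :
    hT μ e k he (hrow r c (V : Matrix (Fin D) (Fin D) ℂ)
      ((V : Matrix (Fin D) (Fin D) ℂ).map star)) = hT μ e k he (hrow r c 1 1) := by
  rw [hT_apply, hT_apply]
  simp only [hM_row]
  have hc : Continuous (fun U : Matrix.unitaryGroup (Fin D) ℂ => V * U) := by fun_prop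
  conv_rhs => rw [← hμ V]
  rw [integral_map hc.measurable.aemeasurable (hM_cont e _).aestronglyMeasurable]

open NormedSpace in
lemma hexp (A : Matrix (Fin D) (Fin D) ℂ) (hA : Aᴴ = -A) (t : ℝ) :
    exp (t • A) ∈ Matrix.unitaryGroup (Fin D) ℂ := by
  rw [Matrix.mem_unitaryGroup_iff', star_eq_conjTranspose, ← Matrix.exp_conjTranspose,
    conjTranspose_smul, hA, ← Matrix.exp_add_of_commute]
  · simp
  · simp

open NormedSpace in
attribute [local instance] Matrix.linftyOpNormedRing Matrix.linftyOpNormedAlgebra in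
lemma hcurve (A : Matrix (Fin D) (Fin D) ℂ) (hA : Aᴴ = -A) :
    ∃ V : ℝ → Matrix.unitaryGroup (Fin D) ℂ, (V 0 = 1) ∧
      ∀ i j, HasDerivAt (fun t => (V t : Matrix (Fin D) (Fin D) ℂ) i j) (A i j) 0 := by
  have hmem : ∀ t : ℝ, exp (t • A) ∈ Matrix.unitaryGroup (Fin D) ℂ := by
    intro t
    exact hexp A hA t
  refine ⟨fun t => ⟨exp (t • A), hmem t⟩, ?_, ?_⟩
  · ext1; simp
  · intro i j
    have h := hasDerivAt_exp_smul_const (𝕂 := ℝ) A 0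
    rw [zero_smul, exp_zero, one_mul] at h
    exact (LinearMap.toContinuousLinearMap
      (Matrix.entryLinearMap ℝ ℂ i j)).hasFDerivAt.comp_hasDerivAt 0 h

/-- The infinitesimal action. -/
noncomputable def hL {k : ℕ} (he : star e ⬝ᵥ e = 1) (r c : Fin k → Fin D)
    (A : Matrix (Fin D) (Fin D) ℂ) : ℂ :=
  (∑ a, hT μ e k he (Function.update (hrow r c 1 1) (Sum.inl a) (A (r a)))) -
  ∑ a, hT μ e k he (Function.update (hrow r c 1 1) (Sum.inr a) (Aᵀ (c a)))

lemma hL_skew {k : ℕ} (he : star e ⬝ᵥ e = 1)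
    (hμ : ∀ V : ↥(Matrix.unitaryGroup (Fin D) ℂ), μ.map (fun U => V * U) = μ)
    (r c : Fin k → Fin D) (A : Matrix (Fin D) (Fin D) ℂ) (hA : Aᴴ = -A) :
    hL μ e he r c A = 0 := by
  obtain ⟨V, hV0, hV⟩ := hcurve A hA
  have hz : HasDerivAt (fun t => hrow r c (V t : Matrix (Fin D) (Fin D) ℂ)
      ((V t : Matrix (Fin D) (Fin D) ℂ).map star)) (hrow r c A (-Aᵀ)) 0 := by
    rw [hasDerivAt_pi]
    intro i
    rw [hasDerivAt_pi]
    intro l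
    rcases i with a | a
    · exact hV _ _
    · have := (hV (c a) l).star
      have h2 : star (A (c a) l) = (-Aᵀ) (c a) l := by
        have := congrFun (congrFun hA l) (c a)
        simpa using this
      rw [h2] at this
      exact this
  have hz0 : hrow r c (V 0 : Matrix (Fin D) (Fin D) ℂ)
      ((V 0 : Matrix (Fin D) (Fin D) ℂ).map star) = hrow r c 1 1 := by
    rw [hV0]
    congr 1
    simp
  have hd := ((hT μ e k he).hasFDerivAt (hrow r c (V 0 : Matrix (Fin D) (Fin D) ℂ)
      ((V 0 : Matrix (Fin D) (Fin D) ℂ).map star))).restrictScalars ℝ |>.comp_hasDerivAt 0 hz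
  have hconst : (⇑(hT μ e k he) ∘ fun t => hrow r c (V t : Matrix (Fin D) (Fin D) ℂ)
      ((V t : Matrix (Fin D) (Fin D) ℂ).map star)) = fun _ => hT μ e k he (hrow r c 1 1) := by
    funext t
    exact hT_inv μ e he hμ r c (V t)
  rw [hconst] at hd
  have h0 := hd.unique (hasDerivAt_const _ _)
  rw [hz0] at h0
  simp only [ContinuousLinearMap.coe_restrictScalars', ContinuousMultilinearMap.linearDeriv_apply,
    Fintype.sum_sum_type] at h0
  rw [hL, ← h0, sub_eq_add_neg, ← Finset.sum_neg_distrib]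
  congr 1
  refine Finset.sum_congr rfl fun a _ => ?_
  have : hrow r c A (-Aᵀ) (Sum.inr a) = (-1 : ℂ) • Aᵀ (c a) := by
    ext l; simp [hrow]
  rw [this, ContinuousMultilinearMap.map_update_smul]
  simp

lemma hL_add {k : ℕ} (he : star e ⬝ᵥ e = 1) (r c : Fin k → Fin D)
    (A B : Matrix (Fin D) (Fin D) ℂ) :
    hL μ e he r c (A + B) = hL μ e he r c A + hL μ e he r c B := by
  have h1 : ∀ a, (A + B) (r a) = A (r a) + B (r a) := fun _ => rfl
  have h2 : ∀ a, (A + B)ᵀ (c a) = Aᵀ (c a) + Bᵀ (c a) := fun _ => rfl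
  simp only [hL, h1, h2, ContinuousMultilinearMap.map_update_add, Finset.sum_add_distrib]
  ring

lemma hL_smul {k : ℕ} (he : star e ⬝ᵥ e = 1) (r c : Fin k → Fin D)
    (x : ℂ) (A : Matrix (Fin D) (Fin D) ℂ) :
    hL μ e he r c (x • A) = x * hL μ e he r c A := by
  have h1 : ∀ a, (x • A) (r a) = x • A (r a) := fun _ => rfl
  have h2 : ∀ a, (x • A)ᵀ (c a) = x • Aᵀ (c a) := fun _ => rfl
  simp only [hL, h1, h2, ContinuousMultilinearMap.map_update_smul, smul_eq_mul, ← Finset.mul_sum]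
  ring

lemma hL_zero {k : ℕ} (he : star e ⬝ᵥ e = 1)
    (hμ : ∀ V : ↥(Matrix.unitaryGroup (Fin D) ℂ), μ.map (fun U => V * U) = μ)
    (r c : Fin k → Fin D) (A : Matrix (Fin D) (Fin D) ℂ) :
    hL μ e he r c A = 0 := by
  have hdec : A = (1 / 2 : ℂ) • (A - Aᴴ) +
      (-Complex.I / 2) • (Complex.I • (A + Aᴴ)) := by
    ext i j
    simp only [Matrix.add_apply, Matrix.smul_apply, Matrix.sub_apply, smul_eq_mul]
    linear_combination ((1 / 2) * (A i j + Aᴴ i j)) * Complex.I_sq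
  rw [hdec, hL_add, hL_smul, hL_smul, hL_skew μ e he hμ, hL_skew μ e he hμ]
  · simp
  · simp [conjTranspose_smul, conjTranspose_add, add_comm]
  · simp [conjTranspose_sub]

/-- The moments. -/
noncomputable def hG {k : ℕ} (r c : Fin k → Fin D) : ℂ :=
  ∫ U, (∏ a, hw e U (r a)) * ∏ a, star (hw e U (c a)) ∂μ

lemma hT_one {k : ℕ} (he : star e ⬝ᵥ e = 1) (r c : Fin k → Fin D) :
    hT μ e k he (hrow r c 1 1) = hG μ e r c := by
  rw [hT_apply, hG]
  congr 1
  funext U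
  rw [hM_apply, Fintype.prod_sum_type]
  simp [hslot, hrow, dotProduct, Matrix.one_apply]

lemma hG_integrable {k : ℕ} (he : star e ⬝ᵥ e = 1) (r c : Fin k → Fin D) :
    Integrable (fun U => (∏ a, hw e U (r a)) * ∏ a, star (hw e U (c a))) μ := by
  refine (hM_integrable μ e he (hrow r c 1 1)).congr (Filter.Eventually.of_forall fun U => ?_)
  simp only
  rw [hM_apply, Fintype.prod_sum_type]
  simp [hslot, hrow, dotProduct, Matrix.one_apply]

lemma hG_lie {k : ℕ} (he : star e ⬝ᵥ e = 1)
    (hμ : ∀ V : ↥(Matrix.unitaryGroup (Fin D) ℂ), μ.map (fun U => V * U) = μ)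
    (r c : Fin k → Fin D) (i j : Fin D) :
    (∑ a, if r a = i then hG μ e (Function.update r a j) c else 0) =
    ∑ a, if c a = j then hG μ e r (Function.update c a i) else 0 := by
  have h := sub_eq_zero.1 (hL_zero μ e he hμ r c (Matrix.single i j 1))
  convert h using 1
  · refine Finset.sum_congr rfl fun a _ => ?_
    split_ifs with hr
    · rw [← hT_one μ e he]
      congr 1
      funext s l
      rcases s with b | b
      · by_cases hb : b = a
        · subst hb; simp [hrow, Matrix.single_apply, Matrix.one_apply, hr]
        · have hu : Function.update r a j b = r b := Function.update_of_ne hb _ _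
          simp [hrow, hb]
          rw [hu]
      · simp [hrow]
    · symm
      apply ContinuousMultilinearMap.map_coord_zero _ (Sum.inl a)
      ext l
      simp [Matrix.single_apply, Ne.symm hr]
  · refine Finset.sum_congr rfl fun a _ => ?_
    split_ifs with hr
    · rw [← hT_one μ e he]
      congr 1
      funext s l
      rcases s with b | b
      · simp [hrow]
      · by_cases hb : b = a
        · subst hb; simp [hrow, Matrix.single_apply, Matrix.one_apply, hr]
        · have hu : Function.update c a i b = c b := Function.update_of_ne hb _ _
          simp [hrow, hb]
          rw [hu]
    · symm
      apply ContinuousMultilinearMap.map_coord_zero _ (Sum.inr a)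
      ext l
      simp [Matrix.single_apply, Ne.symm hr]

lemma hG_perm_left {k : ℕ} (r c : Fin k → Fin D) (σ : Equiv.Perm (Fin k)) :
    hG μ e (fun a => r (σ a)) c = hG μ e r c := by
  unfold hG
  congr 1
  funext U
  rw [Equiv.prod_comp σ (fun a => hw e U (r a))]

lemma hG_perm_right {k : ℕ} (r c : Fin k → Fin D) (σ : Equiv.Perm (Fin k)) :
    hG μ e r (fun a => c (σ a)) = hG μ e r c := by
  unfold hG
  congr 1
  funext U
  rw [Equiv.prod_comp σ (fun a => star (hw e U (c a)))]

lemma hG_trace {k : ℕ} (he : star e ⬝ᵥ e = 1) (r c : Fin k → Fin D) :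
    ∑ l, hG μ e (Fin.cons l r : Fin (k + 1) → Fin D) (Fin.cons l c : Fin (k + 1) → Fin D)
      = hG μ e r c := by
  unfold hG
  rw [← integral_finsetSum _ (fun l _ => hG_integrable μ e he _ _)]
  congr 1
  funext U
  have h := hw_norm e he U
  simp only [Fin.prod_univ_succ, Fin.cons_zero, Fin.cons_succ]
  simp only [dotProduct, Pi.star_apply] at h
  calc _ = ∑ l, (star (hw e U l) * hw e U l) *
        ((∏ a, hw e U (r a)) * ∏ a, star (hw e U (c a))) :=
        Finset.sum_congr rfl fun l _ => by ring
    _ = _ := by rw [← Finset.sum_mul, h, one_mul]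

lemma update_swap {k : ℕ} (c : Fin (k + 1) → Fin D) (a : Fin (k + 1)) (l : Fin D) :
    (fun b => Function.update c a l (Equiv.swap 0 a b)) =
      (Fin.cons l (fun x : Fin k => c (Equiv.swap 0 a x.succ)) : Fin (k + 1) → Fin D) := by
  funext b
  refine Fin.cases ?_ (fun x => ?_) b
  · simp
  · have : Equiv.swap 0 a x.succ ≠ a := by
      intro h
      have h2 : Equiv.swap 0 a x.succ = Equiv.swap 0 a 0 := by simpa using h
      exact Fin.succ_ne_zero x ((Equiv.swap 0 a).injective h2)
    simp [this]

lemma hG_rec {k : ℕ} (he : star e ⬝ᵥ e = 1)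
    (hμ : ∀ V : ↥(Matrix.unitaryGroup (Fin D) ℂ), μ.map (fun U => V * U) = μ)
    (r : Fin (k + 1) → Fin D) (c : Fin (k + 1) → Fin D) :
    ((D : ℂ) + k) * hG μ e r c =
      ∑ a, if c a = r 0 then hG μ e (fun x => r (Fin.succ x))
        (fun x : Fin k => c (Equiv.swap 0 a x.succ)) else 0 := by
  have h := Finset.sum_congr (rfl : (Finset.univ : Finset (Fin D)) = Finset.univ)
    fun l _ => hG_lie μ e he hμ (Function.update r 0 l) c l (r 0)
  have hR : ∑ l, ∑ a, (if c a = r 0 then hG μ e (Function.update r 0 l)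
      (Function.update c a l) else 0) = ∑ a, if c a = r 0 then hG μ e (fun x => r (Fin.succ x))
        (fun x : Fin k => c (Equiv.swap 0 a x.succ)) else 0 := by
    rw [Finset.sum_comm]
    refine Finset.sum_congr rfl fun a _ => ?_
    split_ifs with hc
    · rw [← hG_trace μ e he]
      refine Finset.sum_congr rfl fun l _ => ?_
      rw [← hG_perm_right μ e _ _ (Equiv.swap 0 a), update_swap]
      congr 1
      funext b
      refine Fin.cases ?_ (fun x => ?_) b <;> simp
    · simp
  have hLft : ∑ l, ∑ a, (if Function.update r 0 l a = l then
      hG μ e (Function.update (Function.update r 0 l) a (r 0)) c else 0) =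
      ((D : ℂ) + k) * hG μ e r c := by
    simp only [Fin.sum_univ_succ, Function.update_self, if_true, Function.update_idem,
      Function.update_eq_self, Finset.sum_add_distrib]
    rw [Finset.sum_comm, add_mul]
    congr 1
    · simp
    · have : ∀ x : Fin k, (∑ l, if Function.update r 0 l x.succ = l then
          hG μ e (Function.update (Function.update r 0 l) x.succ (r 0)) c else 0) =
          hG μ e r c := by
        intro x
        have hx : ∀ l, Function.update r 0 l x.succ = r x.succ := fun l => by simp
        simp only [hx, Finset.sum_ite_eq, Finset.mem_univ, if_true]
        rw [← hG_perm_left μ e r c (Equiv.swap 0 x.succ)]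
        congr 1
        funext b
        by_cases h1 : b = x.succ
        · subst h1; simp
        · by_cases h0 : b = 0
          · subst h0; simp [h1]
          · simp [h1, h0, Equiv.swap_apply_of_ne_of_ne]
      rw [Finset.sum_congr rfl fun x _ => this x]
      simp
  rw [← hLft, h, hR]

/-- The number of permutations carrying `c` to `r`. -/
def hN {k : ℕ} (r c : Fin k → Fin D) : ℂ :=
  ∑ g : Equiv.Perm (Fin k), if r = fun a => c (g a) then 1 else 0

lemma hN_rec {k : ℕ} (r c : Fin (k + 1) → Fin D) :
    hN r c = ∑ a, if c a = r 0 then hN (fun x => r (Fin.succ x))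
        (fun x : Fin k => c (Equiv.swap 0 a x.succ)) else 0 := by
  unfold hN
  rw [← Equiv.sum_comp Equiv.Perm.decomposeFin.symm, Fintype.sum_prod_type]
  refine Finset.sum_congr rfl fun a _ => ?_
  have key : ∀ g : Equiv.Perm (Fin k),
      (r = fun b => c (Equiv.Perm.decomposeFin.symm (a, g) b)) ↔
      (c a = r 0 ∧ (fun x => r (Fin.succ x)) = fun x => c (Equiv.swap 0 a (g x).succ)) := by
    intro g
    constructor
    · intro h
      refine ⟨?_, ?_⟩
      · have := congrFun h 0
        simpa using this.symm
      · funext x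
        have := congrFun h x.succ
        simpa using this
    · rintro ⟨h1, h2⟩
      funext b
      refine Fin.cases ?_ (fun x => ?_) b
      · simp [h1]
      · simpa using congrFun h2 x
  simp only [key]
  split_ifs with h
  · simp [h]
  · simp [h]

lemma hG_eq {k : ℕ} (hD : 1 ≤ D) (he : star e ⬝ᵥ e = 1)
    (hμ : ∀ V : ↥(Matrix.unitaryGroup (Fin D) ℂ), μ.map (fun U => V * U) = μ)
    (r c : Fin k → Fin D) :
    hG μ e r c = (((D - 1).factorial : ℂ) / ((D + k - 1).factorial : ℂ)) * hN r c := by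
  induction k with
  | zero =>
    have h1 : r = c := Subsingleton.elim _ _
    have hf : ((D - 1).factorial : ℂ) ≠ 0 := by exact_mod_cast Nat.factorial_ne_zero _
    subst h1
    simp [hG, hN, hf, eq_iff_true_of_subsingleton]
  | succ k ih =>
    have h := hG_rec μ e he hμ r c
    simp only [ih, ← mul_ite_zero] at h
    rw [← Finset.mul_sum, ← hN_rec] at h
    have hne : ((D : ℂ) + k) ≠ 0 := by
      have : D + k ≠ 0 := by omega
      exact_mod_cast this
    have hf : ((D + (k + 1) - 1).factorial : ℂ) = ((D : ℂ) + k) * ((D + k - 1).factorial : ℂ) := by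
      have h1 : D + (k + 1) - 1 = (D + k - 1) + 1 := by omega
      have h2 : ((D + k - 1 : ℕ) : ℂ) + 1 = D + k := by
        have : (D + k - 1) + 1 = D + k := by omega
        exact_mod_cast this
      rw [h1, Nat.factorial_succ]
      push_cast
      rw [h2]
    have hf2 : ((D + k - 1).factorial : ℂ) ≠ 0 := by exact_mod_cast Nat.factorial_ne_zero _
    rw [hf]
    apply mul_left_cancel₀ hne
    rw [h]
    field_simp

end HaarProof

/-- For `μ` the normalized Haar (i.e. left-invariant) probability measure on the unitary group
`U(D)` and `e₁` a fixed unit vector of `ℂ^D`, the `k`-th moment of the Haar random pure state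
ensemble equals the normalized sum of permutation operators:
`∫ (U|e₁⟩⟨e₁|U†)^{⊗k} dμ(U) = ((D−1)!/(D+k−1)!) Σ_{g ∈ S_k} P_D(g)`. -/
theorem haar_state_moment (D k : ℕ) (hD : 1 ≤ D) (hk : 1 ≤ k)
    (μ : Measure ↥(Matrix.unitaryGroup (Fin D) ℂ)) [IsProbabilityMeasure μ]
    (hμ : ∀ V : ↥(Matrix.unitaryGroup (Fin D) ℂ), μ.map (fun U => V * U) = μ)
    (e₁ : Fin D → ℂ) (he : star e₁ ⬝ᵥ e₁ = 1) :
    ∀ r c : Fin k → Fin D,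
      (∫ U : ↥(Matrix.unitaryGroup (Fin D) ℂ),
          tensorPow (k := k)
            ((U : Matrix (Fin D) (Fin D) ℂ) * vecMulVec e₁ (star e₁) *
              (U : Matrix (Fin D) (Fin D) ℂ)ᴴ) r c ∂μ)
        = (((D - 1).factorial : ℂ) / ((D + k - 1).factorial : ℂ)) *
            (∑ g : Equiv.Perm (Fin k), permMatrix D g) r c := by
  intro r c
  have h := hG_eq μ e₁ hD he hμ r c
  have hs : (∑ g : Equiv.Perm (Fin k), permMatrix D g) r c = hN r c := by
    simp [Matrix.sum_apply, permMatrix, hN]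
  rw [hs, ← h, hG]
  congr 1
  funext U
  rw [tensorPow, ← Finset.prod_mul_distrib]
  refine Finset.prod_congr rfl fun a _ => ?_
  rw [mul_vecMulVec, vecMulVec_mul, vecMulVec_apply, hw, ← star_mulVec]
  rfl
end

section
/- Let D_A, D₂ ≥ 1 and k ≥ 1 be integers, let μ be the normalized Haar probability measure on the unitary group U(D_A·D₂) acting on ℂ^{D_A} ⊗ ℂ^{D₂}, and let e₁ be a fixed unit vector. Then the k-th moment of the generalized Hilbert–Schmidt ensemble, obtained by tracing out the ℂ^{D₂} factor of a Haar random pure state, equals ∫ (Tr_{D₂}(U |e₁⟩⟨e₁| U†))^{⊗k} dμ(U) = ((D_A D₂ − 1)!/(D_A D₂ + k − 1)!) Σ_{g ∈ S_k} D₂^{l(g)} P_{D_A}(g). -/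
open Matrix MeasureTheory

/-- Number of cycles of a permutation, counting fixed points as cycles of length 1. -/
def cycleCount {k : ℕ} (g : Equiv.Perm (Fin k)) : ℕ :=
  g.cycleType.card + (k - g.support.card)

/-- Partial trace over the `ℂ^{D₂}` factor of an operator on `ℂ^{D_A} ⊗ ℂ^{D₂}`, defined
entrywise by summing matrix entries diagonal in the `ℂ^{D₂}` index. -/
noncomputable def ptrace {DA D2 : ℕ} (M : Matrix (Fin DA × Fin D2) (Fin DA × Fin D2) ℂ) :
    Matrix (Fin DA) (Fin DA) ℂ :=
  fun i j => ∑ b : Fin D2, M (i, b) (j, b)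

open Classical in
theorem aux_card_fixed {k : ℕ} (g : Equiv.Perm (Fin k)) (D : ℕ) :
    (Finset.univ.filter (fun b : Fin k → Fin D => b = fun a => b (g a))).card
      = D ^ cycleCount g := by
  let T := ↥g.cycleFactorsFinset ⊕ ↥(g.supportᶜ : Finset (Fin k))
  let q : Fin k → T := fun x =>
    if hx : x ∈ g.support then
      Sum.inl ⟨g.cycleOf x, Equiv.Perm.cycleOf_mem_cycleFactorsFinset_iff.mpr hx⟩
    else Sum.inr ⟨x, by simpa using hx⟩
  have hcard : Fintype.card T = cycleCount g := by
    simp only [T, Fintype.card_sum, Fintype.card_coe, Finset.card_compl, Fintype.card_fin,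
      cycleCount, Equiv.Perm.cycleType_def, Multiset.card_map]
    rfl
  have hsurj : Function.Surjective q := by
    rintro (⟨c, hc⟩ | ⟨x, hx⟩)
    · obtain ⟨a, ha⟩ := (Equiv.Perm.mem_cycleFactorsFinset_iff.mp hc).1.nonempty_support
      have ha' : a ∈ g.support := Equiv.Perm.mem_cycleFactorsFinset_support_le hc ha
      refine ⟨a, ?_⟩
      simp only [q, dif_pos ha']
      congr 2
      exact (Equiv.Perm.cycle_is_cycleOf ha hc).symm
    · refine ⟨x, ?_⟩
      have : x ∉ g.support := by simpa using hx
      simp only [q, dif_neg this]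
  have hq : ∀ x, q (g x) = q x := by
    intro x
    by_cases hx : x ∈ g.support
    · have hx' : g x ∈ g.support := Equiv.Perm.apply_mem_support.mpr hx
      simp only [q, dif_pos hx, dif_pos hx']
      congr 2
      exact (Equiv.Perm.SameCycle.cycleOf_eq (Equiv.Perm.sameCycle_apply_left.mpr (Equiv.Perm.SameCycle.refl g x)))
    · have : g x = x := by simpa using hx
      rw [this]
  have hsame : ∀ x y, q x = q y → g.SameCycle x y := by
    intro x y h
    by_cases hx : x ∈ g.support <;> by_cases hy : y ∈ g.support
    · simp only [q, dif_pos hx, dif_pos hy] at h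
      exact (Equiv.Perm.sameCycle_iff_cycleOf_eq_of_mem_support hx hy).mpr (congrArg Subtype.val (Sum.inl.inj h))
    · simp only [q, dif_pos hx, dif_neg hy] at h
      exact absurd h Sum.inl_ne_inr
    · simp only [q, dif_neg hx, dif_pos hy] at h
      exact absurd h Sum.inr_ne_inl
    · simp only [q, dif_neg hx, dif_neg hy] at h
      exact (congrArg Subtype.val (Sum.inr.inj h)).sameCycle g
  have hb : ∀ b : Fin k → Fin D, (b = fun a => b (g a)) → ∀ x y, g.SameCycle x y → b x = b y := by
    rintro b hb x y hxy
    obtain ⟨n, rfl⟩ := hxy.exists_nat_pow_eq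
    clear hxy
    induction n with
    | zero => simp
    | succ n ih =>
      rw [ih, pow_succ', Equiv.Perm.mul_apply]
      exact congrFun hb _
  rw [← hcard]
  have : D ^ Fintype.card T = (Finset.univ : Finset (T → Fin D)).card := by simp
  rw [this]
  symm
  refine Finset.card_bij (fun h _ => h ∘ q) ?_ ?_ ?_
  · intro h _
    simp only [Finset.mem_filter, Finset.mem_univ, true_and]
    funext a
    simp [hq]
  · intro h _ h' _ e
    exact hsurj.injective_comp_right e
  · intro b hbm
    simp only [Finset.mem_filter, Finset.mem_univ, true_and] at hbm
    refine ⟨fun t => b (Function.surjInv hsurj t), Finset.mem_univ _, ?_⟩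
    funext x
    exact hb b hbm _ _ (hsame _ _ (Function.surjInv_eq hsurj (q x)))

theorem aux_exists_perm {ι : Type*} [DecidableEq ι] {k : ℕ} (x y : Fin k → ι)
    (h : ∀ i, (Finset.univ.filter (fun a => x a = i)).card
      = (Finset.univ.filter (fun a => y a = i)).card) :
    ∃ σ : Equiv.Perm (Fin k), x = fun a => y (σ a) := by
  have e : ∀ c, Nonempty ({a // x a = c} ≃ {b // y b = c}) := fun c =>
    ⟨Fintype.equivOfCardEq (by rw [Fintype.card_subtype, Fintype.card_subtype]; exact h c)⟩
  refine ⟨Equiv.ofFiberEquiv (fun c => (e c).some), ?_⟩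
  funext a
  exact (Equiv.ofFiberEquiv_map _ a).symm

/-- number of permutations matching y to x -/
def permN {ι : Type*} [DecidableEq ι] {k : ℕ} (x y : Fin k → ι) : ℂ :=
  ∑ g : Equiv.Perm (Fin k), if x = (fun a => y (g a)) then 1 else 0

theorem permN_right {ι : Type*} [DecidableEq ι] {k : ℕ} (x y : Fin k → ι)
    (σ : Equiv.Perm (Fin k)) : permN x (fun a => y (σ a)) = permN x y := by
  unfold permN
  refine Fintype.sum_equiv (Equiv.mulLeft σ) _ _ ?_
  intro g
  rfl

theorem permN_left {ι : Type*} [DecidableEq ι] {k : ℕ} (x y : Fin k → ι)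
    (σ : Equiv.Perm (Fin k)) : permN (fun a => x (σ a)) y = permN x y := by
  unfold permN
  refine Fintype.sum_equiv (Equiv.mulRight σ⁻¹) _ _ ?_
  intro g
  congr 1
  simp only [Equiv.coe_mulRight, Equiv.Perm.mul_apply, eq_iff_iff]
  constructor
  · intro h
    funext a
    have := congrFun h (σ⁻¹ a)
    simpa using this
  · intro h
    funext a
    have := congrFun h (σ a)
    simpa using this

theorem sum_permN_diag {ι : Type*} [Fintype ι] [DecidableEq ι] {k : ℕ} :
    ∑ x : Fin k → ι, permN x x = (((Fintype.card ι).ascFactorial k : ℕ) : ℂ) := by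
  let q : (Fin k → ι) → Sym ι k := fun x => ⟨Finset.univ.val.map x, by simp⟩
  have hq : ∀ x y, q x = q y → ∃ σ : Equiv.Perm (Fin k), x = fun a => y (σ a) := by
    intro x y h
    apply aux_exists_perm
    intro i
    have h1 : (Finset.univ : Finset (Fin k)).val.map x = Finset.univ.val.map y :=
      congrArg Subtype.val h
    have h2 := congrArg (Multiset.count i) h1
    rw [Multiset.count_map, Multiset.count_map] at h2
    simp only [Finset.card_def, Finset.filter_val]
    simpa [eq_comm] using h2
  have hq' : ∀ x (σ : Equiv.Perm (Fin k)), q (fun a => x (σ a)) = q x := by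
    intro x σ
    apply Subtype.ext
    change Finset.univ.val.map (x ∘ σ) = Finset.univ.val.map x
    rw [← Multiset.map_map, Multiset.map_univ_val_equiv]
  have hsurj : Function.Surjective q := by
    rintro ⟨s, hs⟩
    induction s using Quotient.inductionOn with
    | h l =>
      subst hs
      refine ⟨fun a => l.get a, ?_⟩
      apply Subtype.ext
      change (Finset.univ : Finset (Fin l.length)).val.map (fun a => l.get a) = (l : Multiset ι)
      rw [Fin.univ_val_map]
      simp
  classical
  rw [← Finset.sum_fiberwise Finset.univ q (fun x => permN x x)]
  have : ∀ s : Sym ι k, ∑ x : Fin k → ι with q x = s, permN x x = (k.factorial : ℂ) := by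
    intro s
    obtain ⟨x0, rfl⟩ := hsurj s
    have h1 : ∀ x ∈ Finset.univ.filter (fun x => q x = q x0), permN x x = permN x x0 := by
      intro x hx
      obtain ⟨σ, rfl⟩ := hq x x0 (by simpa using hx)
      rw [permN_right]
    rw [Finset.sum_congr rfl h1]
    unfold permN
    rw [Finset.sum_comm]
    have h2 : ∀ g : Equiv.Perm (Fin k), (∑ x : Fin k → ι with q x = q x0,
        if x = (fun a => x0 (g a)) then (1:ℂ) else 0) = 1 := by
      intro g
      rw [Finset.sum_ite_eq', if_pos]
      simp [hq']
    simp [h2, Fintype.card_perm]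
  simp only [this, Finset.sum_const, Finset.card_univ, nsmul_eq_mul]
  rw [Sym.card_sym_eq_multichoose, Nat.multichoose_eq, Nat.ascFactorial_eq_factorial_mul_choose']
  push_cast; ring

theorem sum_permN_prod {ι : Type*} [Fintype ι] [DecidableEq ι] {k : ℕ} (w z : ι → ℂ) :
    ∑ x : Fin k → ι, ∑ y : Fin k → ι, permN x y * ((∏ a, w (x a)) * ∏ a, z (y a))
      = k.factorial * (∑ i, w i * z i) ^ k := by
  unfold permN
  simp_rw [Finset.sum_mul]
  rw [Finset.sum_comm]
  have : ∀ y : Fin k → ι, (∑ x : Fin k → ι, ∑ g : Equiv.Perm (Fin k),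
      (if x = (fun a => y (g a)) then (1:ℂ) else 0) * ((∏ a, w (x a)) * ∏ a, z (y a)))
      = k.factorial * ∏ a, (w (y a) * z (y a)) := by
    intro y
    rw [Finset.sum_comm]
    have : ∀ g : Equiv.Perm (Fin k), (∑ x : Fin k → ι,
      (if x = (fun a => y (g a)) then (1:ℂ) else 0) * ((∏ a, w (x a)) * ∏ a, z (y a)))
      =  ∏ a, (w (y a) * z (y a)) := by
      intro g
      simp only [ite_mul, one_mul, zero_mul, Finset.sum_ite_eq', Finset.mem_univ, if_true]
      rw [Finset.prod_mul_distrib, Equiv.prod_comp g (fun a => w (y a))]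
    rw [Finset.sum_congr rfl fun g _ => this g]
    simp [Fintype.card_perm]
  rw [Finset.sum_congr rfl fun y _ => this y, ← Finset.mul_sum]
  congr 1
  rw [← Fin.prod_const, Finset.prod_univ_sum]
  simp

open MvPolynomial in
theorem tensor_eq_zero {ι : Type*} [Fintype ι] [DecidableEq ι] {k : ℕ}
    (T : (Fin k → ι) → (Fin k → ι) → ℂ)
    (hl : ∀ x y (σ : Equiv.Perm (Fin k)), T (fun a => x (σ a)) y = T x y)
    (hr : ∀ x y (σ : Equiv.Perm (Fin k)), T x (fun a => y (σ a)) = T x y)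
    (h : ∀ w : ι → ℂ, ∑ x : Fin k → ι, ∑ y : Fin k → ι,
      T x y * ((∏ a, star (w (x a))) * ∏ a, w (y a)) = 0) : ∀ x y, T x y = 0 := by
  let G : MvPolynomial (ι ⊕ ι) ℂ := ∑ x : Fin k → ι, ∑ y : Fin k → ι,
    C (T x y) * ((∏ a, (X (Sum.inl (x a)) - C Complex.I * X (Sum.inr (x a)))) *
      ∏ a, (X (Sum.inl (y a)) + C Complex.I * X (Sum.inr (y a))))
  have hG : G = 0 := by
    refine MvPolynomial.funext_set (fun _ => Set.range ((↑) : ℝ → ℂ))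
      (fun _ => Set.infinite_range_of_injective Complex.ofReal_injective) ?_
    intro v hv
    have hv' : ∀ j, star (v j) = v j := by
      intro j
      obtain ⟨r, hr⟩ := hv j (Set.mem_univ _)
      rw [← hr]; simp
    rw [map_zero, ← h (fun i => v (Sum.inl i) + Complex.I * v (Sum.inr i))]
    simp only [G, map_sum, map_mul, map_prod, eval_C, eval_X, map_add, map_sub, star_add, star_mul',
      hv']
    simp [sub_eq_add_neg]
  let P : MvPolynomial (ι ⊕ ι) ℂ := ∑ x : Fin k → ι, ∑ y : Fin k → ι,
    C (T x y) * ((∏ a, X (Sum.inl (x a))) * ∏ a, X (Sum.inr (y a)))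
  have hP : P = 0 := by
    apply MvPolynomial.funext
    intro v
    have := congrArg (eval (Sum.elim (fun i => (v (Sum.inl i) + v (Sum.inr i)) / 2)
      (fun i => (v (Sum.inr i) - v (Sum.inl i)) / (2 * Complex.I)))) hG
    rw [map_zero] at this ⊢
    rw [← this]
    simp only [G, P, map_sum, map_mul, map_prod, eval_C, eval_X, map_add, map_sub, Sum.elim_inl,
      Sum.elim_inr]
    have e1 : ∀ i, (v (Sum.inl i) + v (Sum.inr i)) / 2
        - Complex.I * ((v (Sum.inr i) - v (Sum.inl i)) / (2 * Complex.I)) = v (Sum.inl i) := by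
      intro i; field_simp; ring
    have e2 : ∀ i, (v (Sum.inl i) + v (Sum.inr i)) / 2
        + Complex.I * ((v (Sum.inr i) - v (Sum.inl i)) / (2 * Complex.I)) = v (Sum.inr i) := by
      intro i; field_simp; ring
    simp only [e1, e2]
  let m : (Fin k → ι) → (Fin k → ι) → (ι ⊕ ι →₀ ℕ) := fun x y =>
    ∑ a, Finsupp.single (Sum.inl (x a)) 1 + ∑ a, Finsupp.single (Sum.inr (y a)) 1
  have hm : ∀ x y, C (T x y) * ((∏ a, X (Sum.inl (x a))) * ∏ a, X (Sum.inr (y a)))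
      = monomial (m x y) (T x y) := by
    intro x y
    simp only [m, X, ← monomial_sum_one, monomial_mul, C_mul_monomial, mul_one]
  have hm1 : ∀ x y i, m x y (Sum.inl i) = (Finset.univ.filter (fun a => x a = i)).card := by
    intro x y i
    simp [m, Finsupp.single_apply]
  have hm2 : ∀ x y i, m x y (Sum.inr i) = (Finset.univ.filter (fun a => y a = i)).card := by
    intro x y i
    simp [m, Finsupp.single_apply]
  intro x0 y0
  have hT : ∀ x y, m x y = m x0 y0 → T x y = T x0 y0 := by
    intro x y e
    obtain ⟨σ, rfl⟩ := aux_exists_perm x x0 (fun i => by rw [← hm1 x y, e, hm1])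
    obtain ⟨τ, rfl⟩ := aux_exists_perm y y0 (fun i => by rw [← hm2 _ y, e, hm2])
    rw [hl, hr]
  have hc := congrArg (coeff (m x0 y0)) hP
  simp only [P, hm, coeff_sum, coeff_monomial, coeff_zero] at hc
  have hc2 : (∑ x : Fin k → ι, ∑ y : Fin k → ι, if m x y = m x0 y0 then (1:ℂ) else 0) * T x0 y0
      = 0 := by
    refine Eq.trans ?_ hc
    simp only [Finset.sum_mul]
    refine Finset.sum_congr rfl fun x _ => Finset.sum_congr rfl fun y _ => ?_
    split_ifs with e
    · rw [hT x y e, one_mul]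
    · rw [zero_mul]
  refine (mul_eq_zero.mp hc2).resolve_left ?_
  have : (∑ x : Fin k → ι, ∑ y : Fin k → ι, if m x y = m x0 y0 then (1:ℂ) else 0)
    = ((∑ x : Fin k → ι, ∑ y : Fin k → ι, if m x y = m x0 y0 then 1 else 0 : ℕ) : ℂ) := by
    push_cast; rfl
  rw [this, Nat.cast_eq_zero]
  intro h0
  simp only [Finset.sum_eq_zero_iff, Finset.mem_univ, true_imp_iff] at h0
  simpa using h0 x0 y0

instance matrixBorelSpace {m n : Type*} : BorelSpace (Matrix m n ℂ) := ⟨rfl⟩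

section
variable {ι : Type*} [Fintype ι] [DecidableEq ι]

theorem aux_integrable (μ : Measure ↥(Matrix.unitaryGroup ι ℂ)) [IsProbabilityMeasure μ]
    (f : ↥(Matrix.unitaryGroup ι ℂ) → ℂ) (hf : Continuous f) : Integrable f μ := by
  have : CompactSpace ↥(Matrix.unitaryGroup ι ℂ) := by
    apply isCompact_iff_compactSpace.mp
    have hc : IsClosed (Matrix.unitaryGroup ι ℂ : Set (Matrix ι ι ℂ)) := by
      have : (Matrix.unitaryGroup ι ℂ : Set (Matrix ι ι ℂ)) = {A | A * star A = 1} := by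
        ext A; exact Matrix.mem_unitaryGroup_iff
      rw [this]
      exact isClosed_eq (by fun_prop) (by fun_prop)
    have hK : IsCompact (Set.pi Set.univ (fun _ : ι => Set.pi Set.univ
        (fun _ : ι => Metric.closedBall (0:ℂ) 1))) :=
      isCompact_univ_pi fun _ => isCompact_univ_pi fun _ => isCompact_closedBall _ _
    refine IsCompact.of_isClosed_subset (X := Matrix ι ι ℂ) hK hc ?_
    intro A hA i _ j _
    simpa using entry_norm_bound_of_unitary hA i j
  obtain ⟨C, hC⟩ := (isCompact_range hf).isBounded.exists_norm_le
  have : SecondCountableTopology (Matrix ι ι ℂ) :=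
    inferInstanceAs (SecondCountableTopology (ι → ι → ℂ))
  exact Integrable.of_bound hf.measurable.aestronglyMeasurable C
    (Filter.Eventually.of_forall fun U => hC _ ⟨U, rfl⟩)

theorem aux_exists_unitary (w : ι → ℂ) (i0 : ι) :
    ∃ V : ↥(Matrix.unitaryGroup ι ℂ), ∃ s : ℂ, (s * star s = ∑ i, star (w i) * w i) ∧
      ∀ ψ : ι → ℂ, ∑ i, star (w i) * ((V : Matrix ι ι ℂ) *ᵥ ψ) i = s * ψ i0 := by
  by_cases hw : w = 0
  · refine ⟨1, 0, by simp [hw], by simp [hw]⟩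
  let W : EuclideanSpace ℂ ι := WithLp.toLp 2 w
  have hW : W ≠ 0 := fun h => hw (by
    have := congrArg WithLp.ofLp h
    simpa [W] using this)
  let u : EuclideanSpace ℂ ι := ((‖W‖ : ℂ)⁻¹) • W
  have hu : ‖u‖ = 1 := norm_smul_inv_norm hW
  obtain ⟨b, hb⟩ := Orthonormal.exists_orthonormalBasis_extension_of_card_eq (𝕜 := ℂ)
    (E := EuclideanSpace ℂ ι) (ι := ι) (by simp) (v := fun _ => u) (s := {i0})
    (by
      rw [orthonormal_iff_ite]
      rintro ⟨i, hi⟩ ⟨j, hj⟩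
      have hi' : i = i0 := hi
      have hj' : j = i0 := hj
      subst hi'; subst hj'
      simp [Set.domRestrict, inner_self_eq_norm_sq_to_K, hu])
  have hb0 : b i0 = u := hb i0 rfl
  refine ⟨⟨_, (EuclideanSpace.basisFun ι ℂ).toMatrix_orthonormalBasis_mem_unitary b⟩,
    (‖W‖ : ℂ), ?_, ?_⟩
  · have := EuclideanSpace.norm_sq_eq W
    have h2 : ((‖W‖ ^ 2 : ℝ) : ℂ) = ((∑ i, ‖W i‖ ^ 2 : ℝ) : ℂ) := by rw [this]
    push_cast at h2
    simp only [Complex.star_def, Complex.conj_ofReal, ← sq, h2]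
    refine Finset.sum_congr rfl fun i _ => ?_
    rw [Complex.conj_mul']
  · intro ψ
    have hWu : W = (‖W‖ : ℂ) • b i0 := by
      rw [hb0, smul_smul, mul_inv_cancel₀, one_smul]
      simpa using hW
    have hin : ∀ j, ∑ i, star (w i) * (b j) i = if j = i0 then (‖W‖ : ℂ) else 0 := by
      intro j
      have h1 : inner ℂ W (b j) = ∑ i, star (w i) * (b j) i := by
        simp [PiLp.inner_apply, W, mul_comm]
      rw [← h1]
      conv_lhs => rw [hWu]
      rw [inner_smul_left, orthonormal_iff_ite.mp b.orthonormal]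
      by_cases h : j = i0
      · subst h; simp
      · simp [h, Ne.symm h]
    simp only [mulVec, dotProduct, Finset.mul_sum]
    rw [Finset.sum_comm]
    have : ∀ j, ∑ i, star (w i) * ((EuclideanSpace.basisFun ι ℂ).toBasis.toMatrix b i j * ψ j)
        = (if j = i0 then (‖W‖ : ℂ) else 0) * ψ j := by
      intro j
      rw [← hin j, Finset.sum_mul]
      refine Finset.sum_congr rfl fun i _ => ?_
      rw [← mul_assoc]
      simp [Module.Basis.toMatrix_apply]
    rw [Finset.sum_congr rfl fun j _ => this j]
    simp

end

section
variable {ι : Type*} [Fintype ι] [DecidableEq ι]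

/-- moment tensor of the random state -/
noncomputable def momF (μ : Measure ↥(Matrix.unitaryGroup ι ℂ)) (e : ι → ℂ) {k : ℕ}
    (x y : Fin k → ι) : ℂ :=
  ∫ U : ↥(Matrix.unitaryGroup ι ℂ), (∏ a, ((U : Matrix ι ι ℂ) *ᵥ e) (x a)) *
    ∏ a, star (((U : Matrix ι ι ℂ) *ᵥ e) (y a)) ∂μ

theorem cont_psi (e : ι → ℂ) (i : ι) :
    Continuous fun U : ↥(Matrix.unitaryGroup ι ℂ) => ((U : Matrix ι ι ℂ) *ᵥ e) i := by
  have : Continuous fun U : ↥(Matrix.unitaryGroup ι ℂ) => (U : Matrix ι ι ℂ) *ᵥ e :=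
    Continuous.matrix_mulVec continuous_subtype_val continuous_const
  exact (continuous_apply i).comp this

theorem momF_int (μ : Measure ↥(Matrix.unitaryGroup ι ℂ)) [IsProbabilityMeasure μ] (e : ι → ℂ)
    {k : ℕ} (x y : Fin k → ι) :
    Integrable (fun U : ↥(Matrix.unitaryGroup ι ℂ) =>
      (∏ a, ((U : Matrix ι ι ℂ) *ᵥ e) (x a)) * ∏ a, star (((U : Matrix ι ι ℂ) *ᵥ e) (y a))) μ := by
  apply aux_integrable
  refine Continuous.mul ?_ ?_
  · exact continuous_finsetProd _ fun a _ => cont_psi e (x a)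
  · exact continuous_finsetProd _ fun a _ => (cont_psi e (y a)).star

theorem momF_expand (μ : Measure ↥(Matrix.unitaryGroup ι ℂ)) [IsProbabilityMeasure μ]
    (e : ι → ℂ) {k : ℕ} (w z : ι → ℂ) :
    ∑ x : Fin k → ι, ∑ y : Fin k → ι, momF μ e x y * ((∏ a, w (x a)) * ∏ a, z (y a))
      = ∫ U : ↥(Matrix.unitaryGroup ι ℂ), (∑ i, w i * ((U : Matrix ι ι ℂ) *ᵥ e) i) ^ k *
        (∑ i, z i * star (((U : Matrix ι ι ℂ) *ᵥ e) i)) ^ k ∂μ := by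
  have h1 : ∀ U : ↥(Matrix.unitaryGroup ι ℂ), (∑ i, w i * ((U : Matrix ι ι ℂ) *ᵥ e) i) ^ k *
        (∑ i, z i * star (((U : Matrix ι ι ℂ) *ᵥ e) i)) ^ k
      = ∑ x : Fin k → ι, ∑ y : Fin k → ι, ((∏ a, ((U : Matrix ι ι ℂ) *ᵥ e) (x a)) *
        ∏ a, star (((U : Matrix ι ι ℂ) *ᵥ e) (y a))) * ((∏ a, w (x a)) * ∏ a, z (y a)) := by
    intro U
    rw [← Fin.prod_const, ← Fin.prod_const, Finset.prod_univ_sum, Finset.prod_univ_sum,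
      Finset.sum_mul_sum]
    simp only [Fintype.piFinset_univ, Finset.prod_mul_distrib]
    refine Finset.sum_congr rfl fun x _ => Finset.sum_congr rfl fun y _ => ?_
    ring
  simp_rw [h1]
  rw [integral_finsetSum _ fun x _ => integrable_finsetSum _ fun y _ =>
    (momF_int μ e x y).mul_const _]
  refine Finset.sum_congr rfl fun x _ => ?_
  rw [integral_finsetSum _ fun y _ => (momF_int μ e x y).mul_const _]
  refine Finset.sum_congr rfl fun y _ => ?_
  rw [integral_mul_const]
  rfl

theorem integral_left_inv (μ : Measure ↥(Matrix.unitaryGroup ι ℂ))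
    (hμ : ∀ V : ↥(Matrix.unitaryGroup ι ℂ), μ.map (fun U => V * U) = μ)
    (V : ↥(Matrix.unitaryGroup ι ℂ)) (f : ↥(Matrix.unitaryGroup ι ℂ) → ℂ) (hf : Continuous f) :
    ∫ U, f (V * U) ∂μ = ∫ U, f U ∂μ := by
  have : SecondCountableTopology (Matrix ι ι ℂ) :=
    inferInstanceAs (SecondCountableTopology (ι → ι → ℂ))
  have hm : Measurable (fun U : ↥(Matrix.unitaryGroup ι ℂ) => V * U) :=
    (continuous_const.mul continuous_id).measurable
  conv_rhs => rw [← hμ V]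
  rw [integral_map hm.aemeasurable hf.measurable.aestronglyMeasurable]

theorem momF_sphere (μ : Measure ↥(Matrix.unitaryGroup ι ℂ)) [IsProbabilityMeasure μ]
    (hμ : ∀ V : ↥(Matrix.unitaryGroup ι ℂ), μ.map (fun U => V * U) = μ)
    (e : ι → ℂ) (k : ℕ) (i0 : ι) (w : ι → ℂ) :
    ∫ U : ↥(Matrix.unitaryGroup ι ℂ), (∑ i, star (w i) * ((U : Matrix ι ι ℂ) *ᵥ e) i) ^ k *
        (∑ i, w i * star (((U : Matrix ι ι ℂ) *ᵥ e) i)) ^ k ∂μ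
    = (∑ i, star (w i) * w i) ^ k * ∫ U : ↥(Matrix.unitaryGroup ι ℂ),
        (((U : Matrix ι ι ℂ) *ᵥ e) i0) ^ k * (star (((U : Matrix ι ι ℂ) *ᵥ e) i0)) ^ k ∂μ := by
  obtain ⟨V, s, hs, hV⟩ := aux_exists_unitary w i0
  have hcont : Continuous fun U : ↥(Matrix.unitaryGroup ι ℂ) =>
      (∑ i, star (w i) * ((U : Matrix ι ι ℂ) *ᵥ e) i) ^ k *
        (∑ i, w i * star (((U : Matrix ι ι ℂ) *ᵥ e) i)) ^ k := by
    refine Continuous.mul (Continuous.pow ?_ _) (Continuous.pow ?_ _)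
    · exact continuous_finsetSum _ fun i _ => continuous_const.mul (cont_psi e i)
    · exact continuous_finsetSum _ fun i _ => continuous_const.mul (cont_psi e i).star
  rw [← integral_left_inv μ hμ V _ hcont, ← integral_const_mul]
  congr 1
  funext U
  have h1 := hV ((U : Matrix ι ι ℂ) *ᵥ e)
  have h2 : ∑ i, w i * star (((V : Matrix ι ι ℂ) *ᵥ ((U : Matrix ι ι ℂ) *ᵥ e)) i)
      = star s * star (((U : Matrix ι ι ℂ) *ᵥ e) i0) := by
    have := congrArg star h1
    simpa [star_sum, mul_comm] using this
  have h3 : ((V * U : ↥(Matrix.unitaryGroup ι ℂ)) : Matrix ι ι ℂ) *ᵥ e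
      = (V : Matrix ι ι ℂ) *ᵥ ((U : Matrix ι ι ℂ) *ᵥ e) := by
    simp [Matrix.mulVec_mulVec]
  rw [h3, h1, h2, ← hs]
  ring

theorem momF_eq (μ : Measure ↥(Matrix.unitaryGroup ι ℂ)) [IsProbabilityMeasure μ] [Nonempty ι]
    (hμ : ∀ V : ↥(Matrix.unitaryGroup ι ℂ), μ.map (fun U => V * U) = μ)
    (e : ι → ℂ) (he : star e ⬝ᵥ e = 1) {k : ℕ} (x y : Fin k → ι) :
    momF μ e x y * (((Fintype.card ι).ascFactorial k : ℕ) : ℂ) = permN x y := by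
  let i0 : ι := Classical.arbitrary ι
  let c : ℂ := (∫ U : ↥(Matrix.unitaryGroup ι ℂ),
        (((U : Matrix ι ι ℂ) *ᵥ e) i0) ^ k * (star (((U : Matrix ι ι ℂ) *ᵥ e) i0)) ^ k ∂μ)
        / (k.factorial : ℂ)
  have hk : (k.factorial : ℂ) ≠ 0 := Nat.cast_ne_zero.mpr k.factorial_ne_zero
  have key : ∀ x y : Fin k → ι, momF μ e x y - c * permN x y = 0 := by
    refine tensor_eq_zero (fun x y => momF μ e x y - c * permN x y) ?_ ?_ ?_
    · intro x y σ
      have : momF μ e (fun a => x (σ a)) y = momF μ e x y := by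
        unfold momF
        congr 1; funext U
        rw [Equiv.prod_comp σ (fun a => ((U : Matrix ι ι ℂ) *ᵥ e) (x a))]
      simp only [this, permN_left]
    · intro x y σ
      have : momF μ e x (fun a => y (σ a)) = momF μ e x y := by
        unfold momF
        congr 1; funext U
        rw [Equiv.prod_comp σ (fun a => star (((U : Matrix ι ι ℂ) *ᵥ e) (y a)))]
      simp only [this, permN_right]
    · intro w
      have h1 := momF_expand (k := k) μ e (fun i => star (w i)) w
      rw [momF_sphere μ hμ e k i0 w] at h1
      have h2 := sum_permN_prod (k := k) (fun i => star (w i)) w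
      simp only [sub_mul, Finset.sum_sub_distrib, mul_assoc, ← Finset.mul_sum]
      rw [h1, h2]
      simp only [c]
      field_simp
      ring
  have key' : ∀ x y : Fin k → ι, momF μ e x y = c * permN x y :=
    fun x y => sub_eq_zero.mp (key x y)
  have htr : ∑ x : Fin k → ι, momF μ e x x = 1 := by
    unfold momF
    rw [← integral_finsetSum _ fun x _ => momF_int μ e x x]
    have : ∀ U : ↥(Matrix.unitaryGroup ι ℂ), ∑ x : Fin k → ι,
        ((∏ a, ((U : Matrix ι ι ℂ) *ᵥ e) (x a)) *
          ∏ a, star (((U : Matrix ι ι ℂ) *ᵥ e) (x a))) = 1 := by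
      intro U
      have hn : ∑ i, ((U : Matrix ι ι ℂ) *ᵥ e) i * star (((U : Matrix ι ι ℂ) *ᵥ e) i) = 1 := by
        have h0 : star ((U : Matrix ι ι ℂ) *ᵥ e) ⬝ᵥ ((U : Matrix ι ι ℂ) *ᵥ e) = 1 := by
          rw [star_mulVec, ← dotProduct_mulVec, mulVec_mulVec, ← star_eq_conjTranspose,
            Matrix.mem_unitaryGroup_iff'.mp U.2, one_mulVec, he]
        rw [← h0]
        simp [dotProduct, mul_comm]
      have := Finset.prod_univ_sum (fun _ : Fin k => (Finset.univ : Finset ι))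
        (fun _ i => ((U : Matrix ι ι ℂ) *ᵥ e) i * star (((U : Matrix ι ι ℂ) *ᵥ e) i))
      simp only [hn, Finset.prod_const_one, Fintype.piFinset_univ, Finset.prod_mul_distrib] at this
      exact this.symm
    simp only [this]
    simp
  simp only [key', ← Finset.mul_sum, sum_permN_diag] at htr
  rw [key', mul_right_comm, htr, one_mul]

end

/-- For `μ` the normalized Haar (left-invariant) probability measure on `U(D_A·D₂)` acting on
`ℂ^{D_A} ⊗ ℂ^{D₂}` and `e₁` a fixed unit vector, the `k`-th moment of the generalized
Hilbert–Schmidt ensemble is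
`∫ (Tr_{D₂}(U|e₁⟩⟨e₁|U†))^{⊗k} dμ(U) = ((D_A D₂−1)!/(D_A D₂+k−1)!) Σ_g D₂^{l(g)} P_{D_A}(g)`. -/
theorem haar_GHS_moment (DA D2 k : ℕ) (hDA : 1 ≤ DA) (hD2 : 1 ≤ D2) (hk : 1 ≤ k)
    (μ : Measure ↥(Matrix.unitaryGroup (Fin DA × Fin D2) ℂ)) [IsProbabilityMeasure μ]
    (hμ : ∀ V : ↥(Matrix.unitaryGroup (Fin DA × Fin D2) ℂ), μ.map (fun U => V * U) = μ)
    (e₁ : Fin DA × Fin D2 → ℂ) (he : star e₁ ⬝ᵥ e₁ = 1) :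
    ∀ r c : Fin k → Fin DA,
      (∫ U : ↥(Matrix.unitaryGroup (Fin DA × Fin D2) ℂ),
          tensorPow (k := k)
            (ptrace ((U : Matrix (Fin DA × Fin D2) (Fin DA × Fin D2) ℂ) *
              vecMulVec e₁ (star e₁) *
              (U : Matrix (Fin DA × Fin D2) (Fin DA × Fin D2) ℂ)ᴴ)) r c ∂μ)
        = (((DA * D2 - 1).factorial : ℂ) / ((DA * D2 + k - 1).factorial : ℂ)) *
            (∑ g : Equiv.Perm (Fin k), (D2 : ℂ) ^ cycleCount g • permMatrix DA g) r c := by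
  intro r c
  classical
  have : Nonempty (Fin DA × Fin D2) := ⟨(⟨0, hDA⟩, ⟨0, hD2⟩)⟩
  have hpt : ∀ U : ↥(Matrix.unitaryGroup (Fin DA × Fin D2) ℂ),
      tensorPow (k := k)
            (ptrace ((U : Matrix (Fin DA × Fin D2) (Fin DA × Fin D2) ℂ) *
              vecMulVec e₁ (star e₁) *
              (U : Matrix (Fin DA × Fin D2) (Fin DA × Fin D2) ℂ)ᴴ)) r c
      = ∑ b : Fin k → Fin D2,
        (∏ a, ((U : Matrix (Fin DA × Fin D2) (Fin DA × Fin D2) ℂ) *ᵥ e₁) (r a, b a)) *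
        ∏ a, star (((U : Matrix (Fin DA × Fin D2) (Fin DA × Fin D2) ℂ) *ᵥ e₁) (c a, b a)) := by
    intro U
    have h1 : (U : Matrix (Fin DA × Fin D2) (Fin DA × Fin D2) ℂ) * vecMulVec e₁ (star e₁) *
        (U : Matrix (Fin DA × Fin D2) (Fin DA × Fin D2) ℂ)ᴴ
        = vecMulVec ((U : Matrix (Fin DA × Fin D2) (Fin DA × Fin D2) ℂ) *ᵥ e₁)
          (star ((U : Matrix (Fin DA × Fin D2) (Fin DA × Fin D2) ℂ) *ᵥ e₁)) := by
      rw [mul_vecMulVec, vecMulVec_mul, star_mulVec]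
    rw [h1]
    simp only [tensorPow, ptrace, vecMulVec_apply, Pi.star_apply]
    rw [Finset.prod_univ_sum]
    simp only [Fintype.piFinset_univ, Finset.prod_mul_distrib]
  simp only [hpt]
  rw [integral_finsetSum _ fun b _ => momF_int μ e₁ (fun a => (r a, b a)) (fun a => (c a, b a))]
  have hA : (((DA * D2).ascFactorial k : ℕ) : ℂ) ≠ 0 := by
    have hpos : 0 < DA * D2 := Nat.mul_pos hDA hD2
    have h := Nat.factorial_mul_ascFactorial' (DA * D2) k hpos
    intro h0
    rw [Nat.cast_eq_zero] at h0
    rw [h0, mul_zero] at h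
    exact Nat.factorial_ne_zero _ h.symm
  have hfac : (((DA * D2 - 1).factorial : ℂ) / ((DA * D2 + k - 1).factorial : ℂ))
      = ((((DA * D2).ascFactorial k : ℕ) : ℂ))⁻¹ := by
    have hpos : 0 < DA * D2 := Nat.mul_pos hDA hD2
    have h := Nat.factorial_mul_ascFactorial' (DA * D2) k hpos
    have h0 : ((DA * D2 - 1).factorial : ℂ) ≠ 0 := Nat.cast_ne_zero.mpr (Nat.factorial_ne_zero _)
    rw [← h]
    push_cast
    field_simp
  have hF : ∀ b : Fin k → Fin D2, momF μ e₁ (fun a => (r a, b a)) (fun a => (c a, b a))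
      = ((((DA * D2).ascFactorial k : ℕ) : ℂ))⁻¹ *
        permN (fun a => (r a, b a)) (fun a => (c a, b a)) := by
    intro b
    have h := momF_eq μ hμ e₁ he (fun a => (r a, b a)) (fun a => (c a, b a))
    simp only [Fintype.card_prod, Fintype.card_fin] at h
    rw [← h]
    field_simp
  rw [hfac]
  refine (Finset.sum_congr rfl fun b _ => hF b).trans ?_
  rw [← Finset.mul_sum]
  congr 1
  unfold permN
  rw [Finset.sum_comm, Matrix.sum_apply]
  refine Finset.sum_congr rfl fun g _ => ?_
  rw [Matrix.smul_apply, smul_eq_mul, permMatrix, ← Nat.cast_pow, ← aux_card_fixed g D2,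
    Finset.card_filter, Nat.cast_sum, Finset.sum_mul]
  refine Finset.sum_congr rfl fun b _ => ?_
  have hiff : ((fun a => (r a, b a)) = fun a => (c (g a), b (g a))) ↔
      (b = fun a => b (g a)) ∧ r = fun a => c (g a) := by
    simp only [funext_iff, Prod.mk.injEq, forall_and]
    tauto
  by_cases h1 : b = fun a => b (g a) <;> by_cases h2 : r = fun a => c (g a)
  · rw [if_pos (hiff.mpr ⟨h1, h2⟩), if_pos h1, if_pos h2]; simp
  · rw [if_neg (fun h => h2 (hiff.mp h).2), if_neg h2]; simp
  · rw [if_neg (fun h => h1 (hiff.mp h).1), if_neg h1]; simp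
  · rw [if_neg (fun h => h1 (hiff.mp h).1), if_neg h1]; simp
end

section
/- Let D ≥ 1 and k ≥ 1 be integers. A linear operator M on (ℂ^D)^{⊗k} commutes with U^{⊗k} for every unitary U ∈ U(D) if and only if M lies in the complex linear span of the permutation operators {P_D(g) : g ∈ S_k} (Schur–Weyl duality for the commutant of the diagonal unitary action). -/
open Matrix

lemma sw_tensorPow_mul {D k : ℕ} (A B : Matrix (Fin D) (Fin D) ℂ) :
    tensorPow (k := k) (A * B) = tensorPow A * tensorPow B := by
  ext r c
  simp only [tensorPow, Matrix.mul_apply]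
  rw [Finset.prod_univ_sum]
  simp [Finset.prod_mul_distrib]

lemma sw_perm_mul {D k : ℕ} (g h : Equiv.Perm (Fin k)) :
    permMatrix D g * permMatrix D h = permMatrix D (h * g) := by
  ext r c
  simp only [permMatrix, Matrix.mul_apply]
  rw [Finset.sum_eq_single (fun a => c (h a))]
  · rw [if_pos rfl, mul_one]; rfl
  · intro b _ hb
    simp [hb]
  · simp

lemma sw_perm_one {D k : ℕ} : permMatrix D (1 : Equiv.Perm (Fin k)) = 1 := by
  ext r c
  simp only [permMatrix, Matrix.one_apply]
  by_cases h : r = c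
  · exact (if_pos h).trans (if_pos h).symm
  · exact (if_neg h).trans (if_neg h).symm

lemma sw_mul_perm_apply {D k : ℕ} (g : Equiv.Perm (Fin k))
    (T : Matrix (Fin k → Fin D) (Fin k → Fin D) ℂ) (r c) :
    (T * permMatrix D g) r c = T r (c ∘ g) := by
  simp only [permMatrix, Matrix.mul_apply]
  rw [Finset.sum_eq_single (fun a => c (g a))]
  · simp; rfl
  · intro b _ hb
    simp [hb]
  · simp

lemma sw_perm_mul_apply {D k : ℕ} (g : Equiv.Perm (Fin k))
    (T : Matrix (Fin k → Fin D) (Fin k → Fin D) ℂ) (r c) :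
    (permMatrix D g * T) r c = T (r ∘ g.symm) c := by
  simp only [permMatrix, Matrix.mul_apply]
  rw [Finset.sum_eq_single (r ∘ g.symm)]
  · simp
  · intro b _ hb
    rw [if_neg, zero_mul]
    rintro rfl
    apply hb
    ext a
    simp
  · simp

lemma sw_perm_comm {D k : ℕ} (g : Equiv.Perm (Fin k)) (U : Matrix (Fin D) (Fin D) ℂ) :
    tensorPow (k := k) U * permMatrix D g = permMatrix D g * tensorPow (k := k) U := by
  ext r c
  rw [sw_mul_perm_apply, sw_perm_mul_apply]
  simp only [tensorPow]
  rw [← Equiv.prod_comp g.symm]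
  simp

/-- Double commutant step. -/
lemma sw_double_commutant {D k : ℕ} (M : Matrix (Fin k → Fin D) (Fin k → Fin D) ℂ)
    (hM : ∀ T : Matrix (Fin k → Fin D) (Fin k → Fin D) ℂ,
      (∀ g, T * permMatrix D g = permMatrix D g * T) → T * M = M * T) :
    M ∈ Submodule.span ℂ (Set.range (permMatrix D (k := k))) := by
  set A := Submodule.span ℂ (Set.range (permMatrix D (k := k))) with hA
  obtain ⟨q, hq⟩ := LinearMap.exists_leftInverse_of_injective A.subtype A.ker_subtype
  have hq1 : ∀ X ∈ A, (q X : Matrix (Fin k → Fin D) (Fin k → Fin D) ℂ) = X := by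
    intro X hX
    have := LinearMap.congr_fun hq ⟨X, hX⟩
    simpa using congrArg Subtype.val this
  have hPA : ∀ g, permMatrix D g ∈ A := fun g => Submodule.subset_span ⟨g, rfl⟩
  have hmul : ∀ g, ∀ X ∈ A, permMatrix D g * X ∈ A := by
    intro g X hX
    induction hX using Submodule.span_induction with
    | mem x hx =>
      obtain ⟨h, rfl⟩ := hx
      rw [sw_perm_mul]; exact hPA _
    | zero => simp
    | add x y _ _ hx hy => rw [mul_add]; exact A.add_mem hx hy
    | smul a x _ hx => rw [Matrix.mul_smul]; exact A.smul_mem _ hx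
  let p : Matrix (Fin k → Fin D) (Fin k → Fin D) ℂ →ₗ[ℂ]
      Matrix (Fin k → Fin D) (Fin k → Fin D) ℂ :=
    ((Fintype.card (Equiv.Perm (Fin k)) : ℂ)⁻¹) • ∑ g : Equiv.Perm (Fin k),
      LinearMap.mulLeft ℂ (permMatrix D g⁻¹) ∘ₗ A.subtype ∘ₗ q ∘ₗ
        LinearMap.mulLeft ℂ (permMatrix D g)
  have hp : ∀ X, p X = ((Fintype.card (Equiv.Perm (Fin k)) : ℂ)⁻¹) •
      ∑ g : Equiv.Perm (Fin k), permMatrix D g⁻¹ *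
        (q (permMatrix D g * X) : Matrix (Fin k → Fin D) (Fin k → Fin D) ℂ) := by
    intro X; simp [p, LinearMap.sum_apply]
  have hpA : ∀ X, p X ∈ A := by
    intro X
    rw [hp]
    exact A.smul_mem _ (A.sum_mem fun g _ => hmul _ _ (q _).2)
  have hp1 : p 1 = 1 := by
    rw [hp]
    have : ∀ g : Equiv.Perm (Fin k), permMatrix D g⁻¹ *
        (q (permMatrix D g * 1) : Matrix (Fin k → Fin D) (Fin k → Fin D) ℂ) = 1 := by
      intro g
      rw [mul_one, hq1 _ (hPA g), sw_perm_mul, mul_inv_cancel, sw_perm_one]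
    rw [Finset.sum_congr rfl fun g _ => this g, Finset.sum_const, Finset.card_univ,
      ← Nat.cast_smul_eq_nsmul ℂ, smul_smul, inv_mul_cancel₀, one_smul]
    exact_mod_cast Fintype.card_ne_zero
  have hpe : ∀ h X, p (permMatrix D h * X) = permMatrix D h * p X := by
    intro h X
    rw [hp, hp, Matrix.mul_smul, Finset.mul_sum]
    congr 1
    rw [← Equiv.sum_comp (Equiv.mulLeft h⁻¹)]
    refine Finset.sum_congr rfl fun g _ => ?_
    simp only [Equiv.coe_mulLeft]
    rw [← mul_assoc, ← mul_assoc, sw_perm_mul, sw_perm_mul]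
    simp
  let T : (Fin k → Fin D) → (Fin k → Fin D) → Matrix (Fin k → Fin D) (Fin k → Fin D) ℂ :=
    fun j l r c => p (Matrix.single c l 1) r j
  have hpT : ∀ X r j, p X r j = ∑ l, (T j l * X) r l := by
    intro X r j
    conv_lhs => rw [Matrix.matrix_eq_sum_single X]
    rw [Finset.sum_comm]
    simp only [map_sum, Matrix.sum_apply, Matrix.mul_apply, T]
    refine Finset.sum_congr rfl fun l _ => Finset.sum_congr rfl fun c _ => ?_
    have : Matrix.single c l (X c l) = X c l • Matrix.single c l (1 : ℂ) := by simp
    rw [this, map_smul, Matrix.smul_apply, smul_eq_mul, mul_comm]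
  have hT : ∀ j l g, T j l * permMatrix D g = permMatrix D g * T j l := by
    intro j l g
    ext r c
    have h1 : (permMatrix D g * T j l) r c = p (permMatrix D g * Matrix.single c l 1) r j := by
      rw [hpe, Matrix.mul_apply, Matrix.mul_apply]
    rw [h1, sw_mul_perm_apply]
    simp only [T]
    have h3 : Matrix.single (c ∘ g) l (1 : ℂ) = permMatrix D g * Matrix.single c l 1 := by
      ext a b
      rw [sw_perm_mul_apply]
      simp only [Matrix.single_apply]
      have : c ∘ g = a ↔ c = a ∘ g.symm := by
        constructor
        · rintro rfl; ext; simp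
        · rintro rfl; ext; simp
      simp only [this]
    rw [h3]
  have : p M = M := by
    ext r j
    rw [hpT]
    simp only [fun l => hM _ (hT j l)]
    have h2 : ∀ s, ∑ l, T j l s l = (1 : Matrix _ _ ℂ) s j := by
      intro s
      rw [← hp1, hpT]; simp
    simp only [Matrix.mul_apply]
    rw [Finset.sum_comm]
    simp only [← Finset.mul_sum, h2]
    rw [← Matrix.mul_apply, mul_one]
  rw [← this]
  exact hpA M

lemma sw_exists_perm {k : ℕ} {α : Type*} [DecidableEq α] (w w' : Fin k → α)
    (h : ∑ a, Finsupp.single (w a) 1 = ∑ a, Finsupp.single (w' a) (1 : ℕ)) :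
    ∃ g : Equiv.Perm (Fin k), w' = w ∘ g := by
  have hc : ∀ x, Fintype.card {a // w' a = x} = Fintype.card {a // w a = x} := by
    intro x
    have := DFunLike.congr_fun h x
    simp only [Finsupp.finsetSum_apply, Finsupp.single_apply, Finset.sum_boole] at this
    simpa [Fintype.card_subtype] using this.symm
  let e : ∀ x, {a // w' a = x} ≃ {a // w a = x} := fun x => Fintype.equivOfCardEq (hc x)
  refine ⟨Equiv.ofFiberEquiv e, ?_⟩
  ext a
  exact (Equiv.ofFiberEquiv_map e a).symm

/-- A functional vanishing on all tensor powers vanishes on the commutant of the permutations. -/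
lemma sw_functional {D k : ℕ} (φ : (Fin k → Fin D) × (Fin k → Fin D) → ℂ)
    (h : ∀ X : Matrix (Fin D) (Fin D) ℂ, ∑ x, φ x * tensorPow X x.1 x.2 = 0)
    (T : Matrix (Fin k → Fin D) (Fin k → Fin D) ℂ)
    (hT : ∀ g, T * permMatrix D g = permMatrix D g * T) :
    ∑ x, φ x * T x.1 x.2 = 0 := by
  classical
  let m : (Fin k → Fin D) × (Fin k → Fin D) → (Fin D × Fin D →₀ ℕ) :=
    fun x => ∑ a, Finsupp.single (x.1 a, x.2 a) 1
  have hTi : ∀ g : Equiv.Perm (Fin k), ∀ r c, T (r ∘ g) (c ∘ g) = T r c := by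
    intro g r c
    have := congrFun (congrFun (hT g) (r ∘ g)) c
    rw [sw_mul_perm_apply, sw_perm_mul_apply] at this
    rw [this]; congr 1; ext; simp
  have hTm : ∀ x y, m x = m y → T x.1 x.2 = T y.1 y.2 := by
    intro x y hxy
    obtain ⟨g, hg⟩ := sw_exists_perm (fun a => (x.1 a, x.2 a)) (fun a => (y.1 a, y.2 a)) hxy
    have h1 : y.1 = x.1 ∘ g := by
      ext a; exact congrArg Fin.val (congrArg Prod.fst (congrFun hg a))
    have h2 : y.2 = x.2 ∘ g := by
      ext a; exact congrArg Fin.val (congrArg Prod.snd (congrFun hg a))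
    rw [h1, h2, hTi]
  have hpoly : (∑ x, MvPolynomial.monomial (m x) (φ x) : MvPolynomial (Fin D × Fin D) ℂ) = 0 := by
    apply MvPolynomial.funext
    intro X
    have := h (fun i j => X (i, j))
    simp only [map_sum, map_zero]
    rw [← this]
    refine Finset.sum_congr rfl fun x _ => ?_
    have : MvPolynomial.monomial (m x) (φ x)
        = MvPolynomial.C (φ x) * MvPolynomial.monomial (m x) 1 := by
      simp [MvPolynomial.C_mul_monomial]
    rw [this, MvPolynomial.monomial_sum_one]
    simp [tensorPow, MvPolynomial.eval_monomial]
  have hfib : ∀ n, ∑ x with m x = n, φ x = 0 := by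
    intro n
    have := congrArg (MvPolynomial.coeff n) hpoly
    simpa [MvPolynomial.coeff_sum, MvPolynomial.coeff_monomial, Finset.sum_filter] using this
  rw [← Finset.sum_fiberwise_of_maps_to (s := Finset.univ) (t := Finset.univ.image m) (g := m)
    (fun x _ => Finset.mem_image_of_mem _ (Finset.mem_univ x))]
  refine Finset.sum_eq_zero fun n hn => ?_
  obtain ⟨y, _, rfl⟩ := Finset.mem_image.1 hn
  rw [Finset.sum_congr rfl (g := fun x => φ x * T y.1 y.2), ← Finset.sum_mul, hfib, zero_mul]
  intro x hx
  rw [hTm x y (Finset.mem_filter.1 hx).2]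

lemma sw_circle_infinite : {z : ℂ | star z * z = 1}.Infinite := by
  have hinj : Function.Injective (fun n : ℕ => Complex.exp (n * Complex.I)) := by
    intro a b hab
    obtain ⟨n, hn⟩ := Complex.exp_eq_exp_iff_exists_int.1 hab
    have h1 : ((a : ℝ) : ℂ) = ((b + n * (2 * Real.pi) : ℝ) : ℂ) := by
      apply mul_right_cancel₀ Complex.I_ne_zero
      push_cast
      rw [hn]; ring
    have h2 : (a : ℝ) = b + n * (2 * Real.pi) := by exact_mod_cast h1
    by_cases hn0 : n = 0
    · subst hn0
      simpa using h2
    · exfalso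
      refine irrational_pi.ne_rational (a - b) (2 * n) ?_
      have : (n : ℝ) ≠ 0 := by exact_mod_cast hn0
      push_cast
      field_simp
      linarith
  refine (Set.infinite_range_of_injective hinj).mono ?_
  rintro _ ⟨n, rfl⟩
  simp only [Set.mem_ofPred_eq, Complex.star_def, ← Complex.exp_conj, ← Complex.exp_add]
  simp

section
variable {D k : ℕ} {M : Matrix (Fin k → Fin D) (Fin k → Fin D) ℂ}

lemma sw_tensorPow_diagonal (d : Fin D → ℂ) :
    tensorPow (k := k) (Matrix.diagonal d) = Matrix.diagonal (fun r => ∏ a, d (r a)) := by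
  ext r c
  by_cases h : r = c
  · subst h; simp [tensorPow]
  · rw [Matrix.diagonal_apply_ne _ h]
    obtain ⟨a, ha⟩ := Function.ne_iff.1 h
    exact Finset.prod_eq_zero (Finset.mem_univ a) (Matrix.diagonal_apply_ne _ ha)

lemma sw_diag
  (hM : ∀ U : Matrix (Fin D) (Fin D) ℂ, U ∈ unitary (Matrix (Fin D) (Fin D) ℂ) →
        tensorPow (k := k) U * M = M * tensorPow (k := k) U)
    (d : Fin D → ℂ) :
    tensorPow (k := k) (Matrix.diagonal d) * M = M * tensorPow (k := k) (Matrix.diagonal d) := by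
  ext r c
  rw [sw_tensorPow_diagonal, Matrix.diagonal_mul, Matrix.mul_diagonal]
  have key : (∏ a, MvPolynomial.X (r a)) * MvPolynomial.C (M r c)
      = MvPolynomial.C (M r c) * (∏ a, MvPolynomial.X (c a) : MvPolynomial (Fin D) ℂ) := by
    apply MvPolynomial.funext_set (fun _ => {z : ℂ | star z * z = 1}) (fun _ => sw_circle_infinite)
    intro x hx
    have hu : Matrix.diagonal x ∈ unitary (Matrix (Fin D) (Fin D) ℂ) := by
      have hx' : ∀ i, star (x i) * x i = 1 := fun i => hx i (Set.mem_univ i)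
      have h1 : (fun i => star x i * x i) = 1 := funext hx'
      have h2 : (fun i => x i * star x i) = 1 := by simpa only [mul_comm] using h1
      rw [Unitary.mem_iff, Matrix.star_eq_conjTranspose, Matrix.diagonal_conjTranspose,
        Matrix.diagonal_mul_diagonal, Matrix.diagonal_mul_diagonal, h1, h2]
      exact ⟨Matrix.diagonal_one, Matrix.diagonal_one⟩
    have := congrFun (congrFun (hM _ hu) r) c
    rw [sw_tensorPow_diagonal, Matrix.diagonal_mul, Matrix.mul_diagonal] at this
    simpa using this
  simpa using congrArg (MvPolynomial.eval d) key

lemma sw_herm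
  (hM : ∀ U : Matrix (Fin D) (Fin D) ℂ, U ∈ unitary (Matrix (Fin D) (Fin D) ℂ) →
        tensorPow (k := k) U * M = M * tensorPow (k := k) U)
    (H : Matrix (Fin D) (Fin D) ℂ) (hH : H.IsHermitian) :
    tensorPow (k := k) H * M = M * tensorPow (k := k) H := by
  rw [hH.spectral_theorem, Unitary.conjStarAlgAut_apply, sw_tensorPow_mul, sw_tensorPow_mul]
  have h1 := hM _ hH.eigenvectorUnitary.2
  have h2 := hM _ (Unitary.star_mem hH.eigenvectorUnitary.2)
  have h3 := sw_diag hM (RCLike.ofReal ∘ hH.eigenvalues)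
  rw [mul_assoc, h2, ← mul_assoc, mul_assoc _ _ M, h3, ← mul_assoc, h1]
  simp only [mul_assoc]

lemma sw_line (φ : (Fin k → Fin D) × (Fin k → Fin D) → ℂ)
    (A B : Matrix (Fin D) (Fin D) ℂ)
    (h : ∀ t : ℝ, ∑ x, φ x * tensorPow (A + (t : ℂ) • B) x.1 x.2 = 0) (z : ℂ) :
    ∑ x, φ x * tensorPow (A + z • B) x.1 x.2 = 0 := by
  let p : Polynomial ℂ := ∑ x : (Fin k → Fin D) × (Fin k → Fin D), Polynomial.C (φ x) *
    ∏ a, (Polynomial.C (A (x.1 a) (x.2 a)) + Polynomial.X * Polynomial.C (B (x.1 a) (x.2 a)))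
  have hp : ∀ z, p.eval z = ∑ x, φ x * tensorPow (A + z • B) x.1 x.2 := by
    intro z
    simp [p, Polynomial.eval_finsetSum, Polynomial.eval_prod, tensorPow]
    simp only [mul_comm z]
  have : p = 0 := by
    apply Polynomial.eq_zero_of_infinite_isRoot
    refine (Set.infinite_range_of_injective Complex.ofReal_injective).mono ?_
    rintro _ ⟨t, rfl⟩
    exact (hp _).trans (h t)
  rw [← hp, this, Polynomial.eval_zero]

/-- An entry of the commutator with `M`, as a functional. -/
lemma sw_comm_entry (M : Matrix (Fin k → Fin D) (Fin k → Fin D) ℂ) (r c : Fin k → Fin D) :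
    ∃ φ : (Fin k → Fin D) × (Fin k → Fin D) → ℂ, ∀ T : Matrix _ _ ℂ,
      ∑ x, φ x * T x.1 x.2 = (T * M) r c - (M * T) r c := by
  refine ⟨fun x => (if x.1 = r then M x.2 c else 0) - (if x.2 = c then M r x.1 else 0), ?_⟩
  intro T
  simp only [sub_mul, Finset.sum_sub_distrib, Matrix.mul_apply]
  congr 1
  · rw [Fintype.sum_prod_type]
    simp [ite_mul, mul_comm]
  · rw [Fintype.sum_prod_type]
    simp [ite_mul]

lemma sw_commutant
  (hM : ∀ U : Matrix (Fin D) (Fin D) ℂ, U ∈ unitary (Matrix (Fin D) (Fin D) ℂ) →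
        tensorPow (k := k) U * M = M * tensorPow (k := k) U)
    (T : Matrix (Fin k → Fin D) (Fin k → Fin D) ℂ)
    (hT : ∀ g, T * permMatrix D g = permMatrix D g * T) : T * M = M * T := by
  ext r c
  obtain ⟨φ, hφ⟩ := sw_comm_entry M r c
  rw [← sub_eq_zero, ← hφ]
  apply sw_functional φ _ T hT
  intro X
  rw [← realPart_add_I_smul_imaginaryPart X]
  apply sw_line
  intro t
  rw [hφ, sw_herm hM, sub_self]
  have h1 : IsSelfAdjoint (realPart X : Matrix (Fin D) (Fin D) ℂ) := (realPart X).2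
  have h2 : IsSelfAdjoint (imaginaryPart X : Matrix (Fin D) (Fin D) ℂ) := (imaginaryPart X).2
  refine h1.add (IsSelfAdjoint.smul ?_ h2)
  simp [isSelfAdjoint_iff]

end

/-- Schur–Weyl duality for the commutant of the diagonal unitary action: an operator `M` on
`(ℂ^D)^{⊗k}` commutes with `U^{⊗k}` for every unitary `U ∈ U(D)` if and only if `M` lies in
the complex linear span of the permutation operators `{P_D(g) : g ∈ S_k}`. -/
theorem schurWeyl_commutant (D k : ℕ) (hD : 1 ≤ D) (hk : 1 ≤ k)
    (M : Matrix (Fin k → Fin D) (Fin k → Fin D) ℂ) :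
    (∀ U : Matrix (Fin D) (Fin D) ℂ, U ∈ unitary (Matrix (Fin D) (Fin D) ℂ) →
        tensorPow (k := k) U * M = M * tensorPow (k := k) U)
    ↔ M ∈ Submodule.span ℂ (Set.range (permMatrix D (k := k))) := by
  constructor
  · intro hM
    exact sw_double_commutant M (sw_commutant hM)
  · intro h U _
    induction h using Submodule.span_induction with
    | mem x hx =>
      obtain ⟨g, rfl⟩ := hx
      exact sw_perm_comm g U
    | zero => simp
    | add x y _ _ hx hy => rw [mul_add, add_mul, hx, hy]
    | smul a x _ hx => rw [Matrix.mul_smul, Matrix.smul_mul, hx]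
end

section
/- Let d ≥ 2 and N ≥ 2 be integers, and let 𝒢 be a nonempty subset of the set DU(d²) of dual-unitary two-qudit gates that is open in the subspace topology of DU(d²) inside U(d²). Then 𝒢 is brick-wall universal: the set of all finite products of brick-wall layers on N qudits with open boundary conditions — where each layer is a tensor product of gates from 𝒢 applied either to the site pairs (1,2),(3,4),… or to the site pairs (2,3),(4,5),…, with the identity on any unpaired boundary sites — is dense in the unitary group U(d^N). -/
open Matrix

/-- The reshuffled matrix `Ũ` of a two-qudit gate `U`, exchanging the roles of space and
time on one leg: `Ũ_{(c,a),(e,b)} := U_{(a,b),(c,e)}`. -/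
def reshuffle {d : ℕ} (U : Matrix (Fin d × Fin d) (Fin d × Fin d) ℂ) :
    Matrix (Fin d × Fin d) (Fin d × Fin d) ℂ :=
  fun p q => U (p.2, q.2) (p.1, q.1)

/-- The set `DU(d²)` of dual-unitary two-qudit gates: those `U ∈ U(d²)` whose reshuffling
`Ũ` is also unitary. -/
def DualUnitary (d : ℕ) : Set (Matrix (Fin d × Fin d) (Fin d × Fin d) ℂ) :=
  {U | U ∈ unitary (Matrix (Fin d × Fin d) (Fin d × Fin d) ℂ) ∧
    reshuffle U ∈ unitary (Matrix (Fin d × Fin d) (Fin d × Fin d) ℂ)}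

/-- The pairs of sites `(1,2), (3,4), …` (0-indexed: `(0,1), (2,3), …`) of an "even"
brick-wall layer on `N` sites. -/
def evenPairs (N : ℕ) : Finset (Fin N × Fin N) :=
  Finset.univ.filter (fun p => (p.1 : ℕ) % 2 = 0 ∧ (p.2 : ℕ) = (p.1 : ℕ) + 1)

/-- The pairs of sites `(2,3), (4,5), …` (0-indexed: `(1,2), (3,4), …`) of an "odd"
brick-wall layer on `N` sites. -/
def oddPairs (N : ℕ) : Finset (Fin N × Fin N) :=
  Finset.univ.filter (fun p => (p.1 : ℕ) % 2 = 1 ∧ (p.2 : ℕ) = (p.1 : ℕ) + 1)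

/-- The matrix on `(ℂ^d)^{⊗N}` of a layer consisting of the two-qudit gates `u p` applied to
the disjoint site pairs `p ∈ P`, with the identity on all unpaired sites. -/
def layerMatrix (d N : ℕ) (P : Finset (Fin N × Fin N))
    (u : Fin N × Fin N → Matrix (Fin d × Fin d) (Fin d × Fin d) ℂ) :
    Matrix (Fin N → Fin d) (Fin N → Fin d) ℂ :=
  fun r c =>
    (∏ p ∈ P, u p (r p.1, r p.2) (c p.1, c p.2)) *
      ∏ s ∈ Finset.univ.filter (fun s : Fin N => ∀ p ∈ P, s ≠ p.1 ∧ s ≠ p.2),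
        (if r s = c s then 1 else 0)

/-- The set of all finite products of brick-wall layers on `N` qudits (open boundary
conditions) with gates drawn from `G`, each layer being either an "even" layer on the pairs
`(1,2),(3,4),…` or an "odd" layer on the pairs `(2,3),(4,5),…`. -/
def BrickCircuits (d N : ℕ) (G : Set (Matrix (Fin d × Fin d) (Fin d × Fin d) ℂ)) :
    Set (Matrix (Fin N → Fin d) (Fin N → Fin d) ℂ) :=
  {M | ∃ L : List (Matrix (Fin N → Fin d) (Fin N → Fin d) ℂ),
    (∀ A ∈ L, ∃ u : Fin N × Fin N → Matrix (Fin d × Fin d) (Fin d × Fin d) ℂ,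
      ((∀ p ∈ evenPairs N, u p ∈ G) ∧ A = layerMatrix d N (evenPairs N) u) ∨
      ((∀ p ∈ oddPairs N, u p ∈ G) ∧ A = layerMatrix d N (oddPairs N) u)) ∧
    M = L.prod}

section LiePart
open NormedSpace Filter Topology Pointwise
variable {A : Type*} [CStarAlgebra A]

/-- One-parameter generators of a submonoid. -/
def lieSet (H : Submonoid A) : Set A := {X | star X = -X ∧ ∀ t : ℝ, exp (t • X) ∈ H}

lemma unitary_norm_le_one {u : A} (hu : u ∈ unitary A) : ‖u‖ ≤ 1 := by
  nontriviality A
  exact (CStarRing.norm_of_mem_unitary hu).le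

lemma norm_pow_sub_pow_le {x y : A} (hx : ‖x‖ ≤ 1) (hy : y ∈ unitary A) (n : ℕ) :
    ‖x ^ n - y ^ n‖ ≤ n * ‖x - y‖ := by
  induction n with
  | zero => simp
  | succ n ih =>
    have h : x ^ (n+1) - y ^ (n+1) = x * (x ^ n - y ^ n) + (x - y) * y ^ n := by
      rw [pow_succ', pow_succ']; noncomm_ring
    have hyn : ‖y ^ n‖ ≤ 1 := unitary_norm_le_one (pow_mem hy n)
    calc _ ≤ ‖x * (x ^ n - y ^ n)‖ + ‖(x - y) * y ^ n‖ := by rw [h]; exact norm_add_le _ _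
      _ ≤ ‖x‖ * ‖x ^ n - y ^ n‖ + ‖x - y‖ * ‖y ^ n‖ := add_le_add (norm_mul_le _ _) (norm_mul_le _ _)
      _ ≤ 1 * ‖x ^ n - y ^ n‖ + ‖x - y‖ * 1 := by gcongr
      _ ≤ _ := by push_cast; linarith

lemma skew_smul {X : A} (h : star X = -X) (t : ℝ) : star (t • X) = -(t • X) := by
  rw [star_smul, h]; simp

lemma exp_skew_unitary {X : A} (h : star X = -X) : exp X ∈ unitary A :=
  let _i := NormedAlgebra.restrictScalars ℚ ℂ A
  exp_mem_unitary_of_mem_skewAdjoint (skewAdjoint.mem_iff.2 h)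

lemma trotter {X Y : A} (hX : star X = -X) (hY : star Y = -Y) :
    Tendsto (fun n : ℕ => (exp ((1 / ((n:ℝ) + 1)) • X) * exp ((1 / ((n:ℝ)+1)) • Y)) ^ (n+1)) atTop
      (𝓝 (exp (X + Y))) := by
  set f : ℝ → A := fun t => exp (t • X) * exp (t • Y) - exp (t • (X + Y)) with hf
  have hd : HasDerivAt f 0 0 := by
    have h1 := hasDerivAt_exp_smul_const (𝕂 := ℝ) X 0
    have h2 := hasDerivAt_exp_smul_const (𝕂 := ℝ) Y 0
    have h3 := hasDerivAt_exp_smul_const (𝕂 := ℝ) (X + Y) 0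
    have := (h1.fun_mul h2).fun_sub h3
    simpa [f] using this
  have hf0 : f 0 = 0 := by simp [hf]
  have hs : Tendsto (fun n : ℕ => 1 / ((n:ℝ) + 1)) atTop (𝓝[≠] 0) := by
    refine tendsto_nhdsWithin_iff.2 ⟨tendsto_one_div_add_atTop_nhds_zero_nat, ?_⟩
    filter_upwards with n
    have : (0:ℝ) < 1 / ((n:ℝ)+1) := by positivity
    exact this.ne'
  have hlim := (hasDerivAt_iff_tendsto_slope.1 hd).comp hs
  rw [tendsto_iff_norm_sub_tendsto_zero]
  refine squeeze_zero (fun _ => norm_nonneg _) (fun n => ?_) (by simpa using hlim.norm)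
  have hn : ((n:ℝ)+1) ≠ 0 := by positivity
  have e : exp (X + Y) = exp ((1 / ((n:ℝ)+1)) • (X + Y)) ^ (n+1) := by
    let _i := NormedAlgebra.restrictScalars ℚ ℂ A
    rw [← NormedSpace.exp_nsmul, ← Nat.cast_smul_eq_nsmul ℝ, smul_smul]
    push_cast
    rw [mul_one_div_cancel hn, one_smul]
  rw [e]
  have hXY : star (X + Y) = -(X + Y) := by rw [star_add, hX, hY]; abel
  refine (norm_pow_sub_pow_le (unitary_norm_le_one (mul_mem (exp_skew_unitary (skew_smul hX _))
    (exp_skew_unitary (skew_smul hY _)))) (exp_skew_unitary (skew_smul hXY _)) _).trans ?_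
  simp only [slope_def_module, hf0, sub_zero, norm_smul, f]
  apply le_of_eq
  rw [Real.norm_of_nonneg (by positivity)]
  simp

lemma lieSet_add {H : Submonoid A} (hc : IsClosed (H : Set A)) {X Y : A} (hX : X ∈ lieSet H)
    (hY : Y ∈ lieSet H) : X + Y ∈ lieSet H := by
  refine ⟨by rw [star_add, hX.1, hY.1]; abel, fun t => ?_⟩
  rw [smul_add]
  refine hc.mem_of_tendsto (trotter (skew_smul hX.1 t) (skew_smul hY.1 t)) ?_
  filter_upwards with n
  simp only [smul_smul]
  exact pow_mem (mul_mem (hX.2 _) (hY.2 _)) _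

lemma lieSet_smul {H : Submonoid A} {X : A} (hX : X ∈ lieSet H) (s : ℝ) : s • X ∈ lieSet H :=
  ⟨skew_smul hX.1 s, fun t => by rw [smul_smul]; exact hX.2 _⟩

lemma lieSet_conj {H : Submonoid A} (hu : ∀ h ∈ H, h ∈ unitary A) (hs : ∀ h ∈ H, star h ∈ H)
    {X h : A} (hX : X ∈ lieSet H) (hh : h ∈ H) : h * X * star h ∈ lieSet H := by
  refine ⟨by simp [hX.1, mul_assoc], fun t => ?_⟩
  have e : t • (h * X * star h) = h * (t • X) * star h := by simp
  let U : Aˣ := Unitary.toUnits ⟨h, hu h hh⟩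
  let _i := NormedAlgebra.restrictScalars ℚ ℂ A
  have := exp_units_conj U (t • X)
  have e2 : exp (h * (t • X) * star h) = h * exp (t • X) * star h := this
  rw [e, e2]
  exact mul_mem (mul_mem hh (hX.2 t)) (hs h hh)

/-- The real Lie algebra as a real submodule. -/
def lieR (H : Submonoid A) (hc : IsClosed (H : Set A)) : Submodule ℝ A where
  carrier := lieSet H
  add_mem' := lieSet_add hc
  zero_mem' := ⟨by simp, fun t => by simp [exp_zero, one_mem]⟩
  smul_mem' s _ h := lieSet_smul h s

lemma lieSet_bracket [FiniteDimensional ℂ A] {H : Submonoid A} (hc : IsClosed (H : Set A))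
    (hu : ∀ h ∈ H, h ∈ unitary A) (hs : ∀ h ∈ H, star h ∈ H) {X Y : A} (hX : X ∈ lieSet H)
    (hY : Y ∈ lieSet H) : X * Y - Y * X ∈ lieSet H := by
  have : FiniteDimensional ℝ A := FiniteDimensional.complexToReal A
  have hcl : IsClosed (lieR H hc : Set A) := Submodule.closed_of_finiteDimensional _
  have hd : HasDerivAt (fun t : ℝ => exp (t • X) * Y * exp (t • (-X))) (X * Y - Y * X) 0 := by
    have h1 := hasDerivAt_exp_smul_const (𝕂 := ℝ) X 0
    have h2 := hasDerivAt_exp_smul_const (𝕂 := ℝ) (-X) 0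
    have := (h1.mul_const Y).fun_mul h2
    simpa [sub_eq_add_neg] using this
  have hlim := (hasDerivAt_iff_tendsto_slope.1 hd)
  refine hcl.mem_of_tendsto hlim ?_
  filter_upwards with t
  rw [slope_def_module]
  refine (lieR H hc).smul_mem _ (Submodule.sub_mem _ ?_ ?_)
  · have := lieSet_conj hu hs hY (hX.2 t)
    rw [star_exp, skew_smul hX.1] at this
    rw [← smul_neg] at this
    exact this
  · have : exp ((0:ℝ) • X) * Y * exp ((0:ℝ) • -X) = Y := by simp
    rw [this]; exact hY

/-- The complexified Lie algebra. -/
def lieC (H : Submonoid A) (hc : IsClosed (H : Set A)) : Submodule ℂ A where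
  carrier := {M | ∃ X ∈ lieR H hc, ∃ Y ∈ lieR H hc, M = X + Complex.I • Y}
  add_mem' := by
    rintro _ _ ⟨X, hX, Y, hY, rfl⟩ ⟨X', hX', Y', hY', rfl⟩
    exact ⟨X + X', add_mem hX hX', Y + Y', add_mem hY hY', by rw [smul_add]; abel⟩
  zero_mem' := ⟨0, zero_mem _, 0, zero_mem _, by simp⟩
  smul_mem' := by
    rintro c _ ⟨X, hX, Y, hY, rfl⟩
    refine ⟨c.re • X - c.im • Y, sub_mem (Submodule.smul_mem _ _ hX) (Submodule.smul_mem _ _ hY),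
      c.im • X + c.re • Y, add_mem (Submodule.smul_mem _ _ hX) (Submodule.smul_mem _ _ hY), ?_⟩
    have h1 : ∀ (r : ℝ) (Z : A), r • Z = (r : ℂ) • Z := fun r Z => (Complex.coe_smul r Z).symm
    simp only [h1]
    conv_lhs => rw [← Complex.re_add_im c]
    simp only [smul_add, smul_smul]
    have : ((c.re:ℂ) + c.im * Complex.I) * Complex.I = -c.im + Complex.I * c.re := by
      rw [add_mul, mul_assoc, Complex.I_mul_I]; ring
    rw [this, mul_comm Complex.I, mul_comm Complex.I]
    simp only [add_smul, neg_smul]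
    abel

lemma lieC_bracket [FiniteDimensional ℂ A] {H : Submonoid A} (hc : IsClosed (H : Set A))
    (hu : ∀ h ∈ H, h ∈ unitary A) (hs : ∀ h ∈ H, star h ∈ H) {X Y : A} (hX : X ∈ lieC H hc)
    (hY : Y ∈ lieC H hc) : X * Y - Y * X ∈ lieC H hc := by
  obtain ⟨X, hX, X', hX', rfl⟩ := hX
  obtain ⟨Y, hY, Y', hY', rfl⟩ := hY
  have b : ∀ {X Y : A}, X ∈ lieR H hc → Y ∈ lieR H hc → X * Y - Y * X ∈ lieR H hc :=
    fun h1 h2 => lieSet_bracket hc hu hs h1 h2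
  refine ⟨(X * Y - Y * X) - (X' * Y' - Y' * X'), sub_mem (b hX hY) (b hX' hY'),
    (X * Y' - Y' * X) + (X' * Y - Y * X'), add_mem (b hX hY') (b hX' hY), ?_⟩
  simp only [add_mul, mul_add, smul_mul_assoc, mul_smul_comm, smul_smul, Complex.I_mul_I, smul_add,
    smul_sub, neg_smul, one_smul]
  abel

lemma lieC_conj {H : Submonoid A} (hc : IsClosed (H : Set A))
    (hu : ∀ h ∈ H, h ∈ unitary A) (hs : ∀ h ∈ H, star h ∈ H)
    {X h : A} (hX : X ∈ lieC H hc) (hh : h ∈ H) : h * X * star h ∈ lieC H hc := by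
  obtain ⟨X, hX, X', hX', rfl⟩ := hX
  exact ⟨_, lieSet_conj hu hs hX hh, _, lieSet_conj hu hs hX' hh, by
    simp [mul_add, add_mul]⟩

/-- If the complexified Lie algebra is everything, all skew elements are generators. -/
lemma lieSet_of_lieC_top {H : Submonoid A} (hc : IsClosed (H : Set A)) (h : lieC H hc = ⊤)
    {X : A} (hX : star X = -X) : X ∈ lieSet H := by
  obtain ⟨Y, hY, Z, hZ, e⟩ : X ∈ lieC H hc := by rw [h]; trivial
  have e1 : X - Y = Complex.I • Z := by rw [e]; abel
  have e2 := congrArg star e1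
  rw [star_sub, hX, hY.1, star_smul, hZ.1] at e2
  have e3 : -(X - Y) = X - Y := by
    conv_rhs => rw [e1]
    rw [neg_sub]
    rw [show -X - -Y = Y - X by abel] at e2
    rw [e2]; simp
  have e4 : X - Y = 0 := by
    have h5 : (2:ℂ) • (X - Y) = 0 := by
      rw [two_smul]; nth_rewrite 1 [← e3]; abel
    exact (smul_eq_zero.1 h5).resolve_left two_ne_zero
  rw [sub_eq_zero.1 e4]; exact hY

/-- Every skew element is in the complex Lie algebra if ..; general elements. -/
lemma mem_lieC_of_skew {B : Type*} [CStarAlgebra B] {H : Submonoid A} (hc : IsClosed (H : Set A))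
    (φ : B →ₗ[ℂ] A) (h : ∀ X : B, star X = -X → φ X ∈ lieSet H) (X : B) : φ X ∈ lieC H hc := by
  set Y : B := (1/2 : ℂ) • (X - star X) with hY
  set Z : B := (-Complex.I * (1/2)) • (X + star X) with hZ
  have e : X = Y + Complex.I • Z := by
    rw [hY, hZ, smul_smul]
    have : Complex.I * (-Complex.I * (1/2)) = 1/2 := by
      rw [← mul_assoc]; simp
    rw [this, ← smul_add]
    rw [show X - star X + (X + star X) = (2:ℂ) • X by rw [two_smul]; abel, smul_smul]; norm_num
  refine ⟨φ Y, h Y ?_, φ Z, h Z ?_, ?_⟩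
  · rw [hY, star_smul, star_sub, star_star]
    simp [← smul_neg]
  · rw [hZ, star_smul, star_add, star_star, ← neg_smul, add_comm]
    congr 1
    simp
  · conv_lhs => rw [e]
    simp

/-- small times suffice -/
lemma mem_lieSet_of_eventually {H : Submonoid A} {X : A} (hX : star X = -X)
    (h : ∀ᶠ t : ℝ in 𝓝 0, exp (t • X) ∈ H) : X ∈ lieSet H := by
  refine ⟨hX, fun t => ?_⟩
  have hs : Tendsto (fun n : ℕ => t * (1 / ((n:ℝ) + 1))) atTop (𝓝 0) := by
    simpa using (tendsto_one_div_add_atTop_nhds_zero_nat (𝕜 := ℝ)).const_mul t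
  obtain ⟨n, hn⟩ := (hs.eventually h).exists
  have hn0 : ((n:ℝ)+1) ≠ 0 := by positivity
  have e : exp (t • X) = exp ((t * (1 / ((n:ℝ)+1))) • X) ^ (n+1) := by
    let _i := NormedAlgebra.restrictScalars ℚ ℂ A
    rw [← NormedSpace.exp_nsmul, ← Nat.cast_smul_eq_nsmul ℝ, smul_smul]
    push_cast
    congr 2
    field_simp
  rw [e]; exact pow_mem hn _

/-- every unitary in a finite-dimensional C*-algebra is an exponential -/
lemma unitary_eq_exp [FiniteDimensional ℂ A] {u : A} (hu : u ∈ unitary A) :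
    ∃ X : A, star X = -X ∧ exp X = u := by
  nontriviality A
  have hfin : (spectrum ℂ u).Finite := by
    have hinteg : IsIntegral ℂ u := Algebra.IsIntegral.isIntegral u
    have hm : minpoly ℂ u ≠ 0 := minpoly.ne_zero hinteg
    refine ((minpoly ℂ u).roots.toFinset.finite_toSet).subset fun z hz => ?_
    have := spectrum.subset_polynomial_aeval u (minpoly ℂ u) ⟨z, hz, rfl⟩
    rw [minpoly.aeval, spectrum.zero_eq] at this
    simpa [hm] using this
  have hinf : (Metric.sphere (0:ℂ) 1).Infinite := by
    refine (isConnected_sphere (by rw [Complex.rank_real_complex]; norm_num) (0:ℂ)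
      zero_le_one).isPreconnected.infinite_of_nontrivial ⟨1, by simp, -1, by simp, ?_⟩
    intro h
    have := congrArg Complex.re h
    norm_num at this
  obtain ⟨z, hz1, hz2⟩ := hinf.exists_notMem_finite (hfin.image (fun x => -x))
  have hz : ‖z‖ = 1 := by simpa using hz1
  have hzz : star z * z = 1 := by
    have := Complex.conj_mul' z
    rw [hz] at this
    simpa using this
  have hz0 : z ≠ 0 := by rintro rfl; simp at hz
  have hw : star z • u ∈ unitary A := by
    rw [Unitary.mem_iff] at hu ⊢
    simp only [star_smul, star_star, smul_mul_assoc, mul_smul_comm, smul_smul, hu.1, hu.2]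
    rw [hzz, mul_comm, hzz]; simp
  have hsp : -1 ∉ spectrum ℂ (star z • u) := by
    intro h
    apply hz2
    have hsz : star z ≠ 0 := by simpa using hz0
    have h2 : spectrum ℂ ((Units.mk0 (star z) hsz) • u) = (Units.mk0 (star z) hsz) • spectrum ℂ u :=
      spectrum.unit_smul_eq_smul u _
    have h3 : -1 ∈ (Units.mk0 (star z) hsz) • spectrum ℂ u := h2 ▸ h
    obtain ⟨x, hx, hx2⟩ := h3
    refine ⟨x, hx, ?_⟩
    have hx3 : star z * x = -1 := hx2
    have : z * (star z * x) = z * (-1) := by rw [hx3]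
    rw [← mul_assoc, mul_comm z, hzz] at this
    simp only [one_mul, mul_neg, mul_one] at this
    simp [this]
  have hn := (Unitary.norm_sub_one_lt_two_iff hw).2 hsp
  have he := expUnitary_argSelfAdjoint (u := ⟨star z • u, hw⟩) hn
  set a := Unitary.argSelfAdjoint (⟨star z • u, hw⟩ : unitary A) with ha
  have he2 : exp (Complex.I • (a : A)) = star z • u := congrArg Subtype.val he
  refine ⟨algebraMap ℂ A (Complex.arg z * Complex.I) + Complex.I • (a : A), ?_, ?_⟩
  · have : star (a : A) = a := a.2
    rw [star_add, star_smul, this, ← algebraMap_star_comm]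
    simp
    abel
  · let _i := NormedAlgebra.restrictScalars ℚ ℂ A
    rw [NormedSpace.exp_add_of_commute (Algebra.commutes _ _), he2, ← algebraMap_exp_comm,
      ← Complex.exp_eq_exp_ℂ]
    have : Complex.exp (Complex.arg z * Complex.I) = z := by
      have := Complex.norm_mul_exp_arg_mul_I z
      rw [hz] at this
      simpa using this
    rw [this, ← Algebra.smul_def, smul_smul, mul_comm, hzz, one_smul]

/-- closed submonoid of unitary group is star closed -/
lemma star_mem_of_closed [FiniteDimensional ℂ A] {H : Submonoid A} (hc : IsClosed (H : Set A))
    (hu : ∀ h ∈ H, h ∈ unitary A) {h : A} (hh : h ∈ H) : star h ∈ H := by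
  nontriviality A
  have : ProperSpace A := FiniteDimensional.proper ℂ A
  have hcl : IsClosed (unitary A : Set A) := isClosed_unitary
  have hK : IsCompact (unitary A : Set A) := by
    refine Metric.isCompact_of_isClosed_isBounded hcl ?_
    refine (Metric.isBounded_closedBall (x := (0:A)) (r := 1)).subset fun x hx => ?_
    simpa using unitary_norm_le_one hx
  have : CompactSpace (unitary A) := isCompact_iff_compactSpace.1 hK
  let x : unitary A := ⟨h, hu h hh⟩
  have := mapClusterPt_self_zpow_atTop_pow x (-1)
  have h2 : MapClusterPt (((x⁻¹ : unitary A) : A)) atTop (fun n : ℕ => ((x ^ n : unitary A) : A)) := by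
    rw [_root_.zpow_neg_one] at this
    exact this.continuousAt_comp (f := ((↑) : unitary A → A)) continuous_subtype_val.continuousAt
  have h3 := hc.closure_eq ▸ mem_closure_iff_clusterPt.2 (ClusterPt.mono h2 (by
    rw [le_principal_iff, mem_map]
    filter_upwards with n
    exact pow_mem hh n : map (fun n : ℕ => ((x ^ n : unitary A) : A)) atTop ≤ 𝓟 (H : Set A)))
  exact h3

end LiePart


section AlgPart

lemma corner_mem {R : Type*} [Ring R] [Algebra ℂ R] (L : Submodule ℂ R) {e f : R}
    (he : e * e = e) (hef : e * f = 0) (hfe : f * e = 0)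
    (ae : ∀ w ∈ L, e * w - w * e ∈ L) (af : ∀ w ∈ L, f * w - w * f ∈ L) {w : R} (hw : w ∈ L) :
    e * w * f ∈ L := by
  have h1 := ae _ (af _ hw)
  have e1 : e * (f * w - w * f) - (f * w - w * f) * e = -(e * w * f) - f * w * e := by
    simp only [mul_sub, sub_mul]
    rw [← mul_assoc e f w, hef, mul_assoc w f e, hfe]
    simp [mul_assoc]
  rw [e1] at h1
  have h2 := ae _ h1
  have e2 : e * (-(e * w * f) - f * w * e) - (-(e * w * f) - f * w * e) * e
      = -(e * w * f) + f * w * e := by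
    have a1 : e * (e * w * f) = e * w * f := by rw [mul_assoc, ← mul_assoc e e, he, ← mul_assoc]
    have a2 : e * (f * w * e) = 0 := by rw [mul_assoc f, ← mul_assoc e f, hef, zero_mul]
    have a3 : e * w * f * e = 0 := by rw [mul_assoc, hfe, mul_zero]
    have a4 : f * w * e * e = f * w * e := by rw [mul_assoc, he]
    simp only [mul_sub, sub_mul, mul_neg, neg_mul, a1, a2, a3, a4]
    abel
  rw [e2] at h2
  have h3 := L.smul_mem (-(1/2) : ℂ) (L.add_mem h1 h2)
  have e3 : (-(1/2) : ℂ) • (-(e * w * f) - f * w * e + (-(e * w * f) + f * w * e)) = e * w * f := by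
    have : -(e * w * f) - f * w * e + (-(e * w * f) + f * w * e) = (-2 : ℂ) • (e * w * f) := by
      rw [neg_smul, two_smul]; abel
    rw [this, smul_smul]; norm_num
  rwa [e3] at h3

variable {m : Type*} [Fintype m] [DecidableEq m]

lemma ideal_aux (T : Submodule ℂ (Matrix m m ℂ)) (hT : ∀ x, ∀ y ∈ T, x * y - y * x ∈ T)
    (h1 : (1 : Matrix m m ℂ) ∈ T) {i j : m} (hij : i ≠ j) (h : Matrix.single i j (1:ℂ) ∈ T) : T = ⊤ := by
  have sa : ∀ i j k : m, i ≠ j → k ≠ j → Matrix.single i j (1:ℂ) ∈ T → Matrix.single k j (1:ℂ) ∈ T := by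
    intro i j k hij hkj h
    have := hT (Matrix.single k i 1) _ h
    simpa [Matrix.single_mul_single_of_ne, hkj.symm, hij] using this
  have sb : ∀ i j l : m, i ≠ j → l ≠ i → Matrix.single i j (1:ℂ) ∈ T → Matrix.single i l (1:ℂ) ∈ T := by
    intro i j l hij hli h
    have := hT (Matrix.single j l 1) _ h
    simpa [Matrix.single_mul_single_of_ne, hli] using this
  have sc : ∀ i j : m, i ≠ j → Matrix.single i j (1:ℂ) ∈ T → Matrix.single j i (1:ℂ) ∈ T := by
    intro i j hij h
    have := hT (Matrix.single j i 1) _ (hT (Matrix.single j i 1) _ h)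
    simp only [mul_sub, sub_mul, Matrix.single_mul_single_same, mul_one,
      Matrix.single_mul_single_of_ne _ _ _ _ hij] at this
    simp only [Matrix.single_mul_single_of_ne _ _ _ _ hij.symm, mul_assoc, zero_sub, sub_zero, mul_zero, Matrix.single_mul_single_same, mul_one] at this
    have e : -single j i (1:ℂ) - single j i 1 = (-2 : ℂ) • single j i (1:ℂ) := by
      rw [neg_smul, two_smul]; abel
    rw [e] at this
    have := T.smul_mem (-1/2) this
    rw [smul_smul] at this
    norm_num at this
    exact this
  have off : ∀ k l : m, k ≠ l → Matrix.single k l (1:ℂ) ∈ T := by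
    intro k l hkl
    by_cases hk : k = j
    · subst hk
      exact sb _ i _ hij.symm hkl.symm (sc _ _ hij h)
    · exact sb _ j _ hk hkl.symm (sa i _ _ hij hk h)
  have df : ∀ k l : m, Matrix.single k k (1:ℂ) - Matrix.single l l 1 ∈ T := by
    intro k l
    by_cases hkl : k = l
    · subst hkl; simp
    · have := hT (Matrix.single k l 1) _ (off l k (Ne.symm hkl))
      simpa using this
  have hone : (1 : Matrix m m ℂ) = ∑ l, Matrix.single l l (1:ℂ) := Matrix.sum_single_one.symm
  have dg : ∀ k : m, Matrix.single k k (1:ℂ) ∈ T := by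
    intro k
    have hs := T.add_mem (T.sum_mem (t := Finset.univ) (fun l _ => df k l)) h1
    rw [Finset.sum_sub_distrib, ← hone, sub_add_cancel, Finset.sum_const, ← Nat.cast_smul_eq_nsmul ℂ] at hs
    have hc : ((Finset.univ : Finset m).card : ℂ) ≠ 0 := by
      have : Nonempty m := ⟨i⟩
      simp
    have := T.smul_mem ((Finset.univ : Finset m).card : ℂ)⁻¹ hs
    rwa [smul_smul, inv_mul_cancel₀ hc, one_smul] at this
  rw [eq_top_iff]
  intro x _
  rw [Matrix.matrix_eq_sum_single x]
  refine T.sum_mem fun a _ => T.sum_mem fun b _ => ?_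
  have : Matrix.single a b (x a b) = (x a b) • Matrix.single a b (1:ℂ) := by simp
  rw [this]
  refine T.smul_mem _ ?_
  by_cases hab : a = b
  · subst hab; exact dg a
  · exact off a b hab

lemma ideal_lemma (T : Submodule ℂ (Matrix m m ℂ)) (hT : ∀ x, ∀ y ∈ T, x * y - y * x ∈ T)
    (h1 : (1 : Matrix m m ℂ) ∈ T) : T = ⊤ ∨ ∀ y ∈ T, ∃ z : ℂ, y = z • 1 := by
  by_cases htop : T = ⊤
  · exact Or.inl htop
  right
  have offz : ∀ y ∈ T, ∀ i j, i ≠ j → y i j = 0 := by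
    intro y hy i j hij
    by_contra hne
    apply htop
    have := corner_mem T (e := Matrix.single i i 1) (f := Matrix.single j j 1) (by simp)
      (Matrix.single_mul_single_of_ne _ _ _ _ hij _) (Matrix.single_mul_single_of_ne _ _ _ _ hij.symm _)
      (fun w hw => hT _ w hw) (fun w hw => hT _ w hw) hy
    rw [Matrix.single_mul_mul_single] at this
    have h2 := T.smul_mem (y i j)⁻¹ this
    refine ideal_aux T hT h1 hij ?_
    simpa [hne] using h2
  intro y hy
  rcases isEmpty_or_nonempty m with hm | ⟨⟨i0⟩⟩
  · exact ⟨0, by ext i; exact hm.elim i⟩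
  refine ⟨y i0 i0, ?_⟩
  ext i j
  by_cases hij : i = j
  · subst hij
    by_cases hi : i = i0
    · subst hi; simp
    · have := offz _ (hT (Matrix.single i i0 1) _ hy) i i0 hi
      simp at this
      rw [sub_eq_zero] at this
      simp [this]
  · rw [offz y hy i j hij]; simp [hij]

open Kronecker in
lemma two_site (L : Submodule ℂ (Matrix (m × m) (m × m) ℂ))
    (hL : ∀ x ∈ L, ∀ y ∈ L, x * y - y * x ∈ L)
    (ha : ∀ a : Matrix m m ℂ, a ⊗ₖ (1 : Matrix m m ℂ) ∈ L)
    (hb : ∀ b : Matrix m m ℂ, (1 : Matrix m m ℂ) ⊗ₖ b ∈ L) :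
    L = ⊤ ∨ ∀ W ∈ L, ∃ A B : Matrix m m ℂ, W = A ⊗ₖ (1 : Matrix m m ℂ) + (1 : Matrix m m ℂ) ⊗ₖ B := by
  by_cases htop : L = ⊤
  · exact Or.inl htop
  right
  -- off-diagonal blocks are scalar
  have key : ∀ W ∈ L, ∀ i j, i ≠ j →
      ∃ z : ℂ, (Matrix.of fun k l => W (i, k) (j, l) : Matrix m m ℂ) = z • 1 := by
    intro W hW i j hij
    have h1 : Matrix.single i j (1:ℂ) ⊗ₖ (Matrix.of fun k l => W (i, k) (j, l) : Matrix m m ℂ) ∈ L := by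
      have := corner_mem L (e := Matrix.single i i 1 ⊗ₖ (1 : Matrix m m ℂ))
        (f := Matrix.single j j 1 ⊗ₖ (1 : Matrix m m ℂ))
        (by rw [← Matrix.mul_kronecker_mul]; simp)
        (by rw [← Matrix.mul_kronecker_mul, Matrix.single_mul_single_of_ne _ _ _ _ hij]; simp)
        (by rw [← Matrix.mul_kronecker_mul, Matrix.single_mul_single_of_ne _ _ _ _ hij.symm]; simp)
        (fun w hw => hL _ (ha _) w hw) (fun w hw => hL _ (ha _) w hw) hW
      convert this using 1
      ext ⟨a, k⟩ ⟨b, l⟩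
      simp only [Matrix.mul_apply, Fintype.sum_prod_type, Matrix.kroneckerMap_apply,
        Matrix.single_apply, Matrix.one_apply, Matrix.of_apply]
      simp only [mul_ite, ite_mul, mul_one, mul_zero, zero_mul, one_mul, Finset.sum_ite_eq,
        Finset.sum_ite_eq', Finset.mem_univ, if_true]
      by_cases h1 : i = a <;> by_cases h2 : j = b <;> simp [h1, h2, ite_and]
    let T : Submodule ℂ (Matrix m m ℂ) :=
      L.comap (Matrix.kroneckerBilinear (R := ℂ) (α := ℂ) (Matrix.single i j (1:ℂ)))
    have hTm : ∀ y, y ∈ T ↔ Matrix.single i j (1:ℂ) ⊗ₖ y ∈ L := fun y => Iff.rfl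
    rcases ideal_lemma T (fun x y hy => by
        rw [hTm] at hy ⊢
        have := hL _ (hb x) _ hy
        rw [← Matrix.mul_kronecker_mul, ← Matrix.mul_kronecker_mul, one_mul, mul_one] at this
        rwa [sub_eq_add_neg, Matrix.kronecker_add, ← neg_one_smul ℂ, Matrix.kronecker_smul,
          neg_one_smul, ← sub_eq_add_neg]) (ha _) with hT | hT
    · exfalso
      apply htop
      have all : ∀ x y : Matrix m m ℂ, x ⊗ₖ y ∈ L := by
        intro x y
        let S : Submodule ℂ (Matrix m m ℂ) :=
          L.comap ((Matrix.kroneckerBilinear (R := ℂ) (α := ℂ)).flip y)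
        have hSm : ∀ y', y' ∈ S ↔ y' ⊗ₖ y ∈ L := fun y => Iff.rfl
        rcases ideal_lemma S (fun x y hy => by
          rw [hSm] at hy ⊢
          have := hL _ (ha x) _ hy
          rw [← Matrix.mul_kronecker_mul, ← Matrix.mul_kronecker_mul, one_mul, mul_one] at this
          rwa [sub_eq_add_neg, Matrix.add_kronecker, ← neg_one_smul ℂ, Matrix.smul_kronecker,
            neg_one_smul, ← sub_eq_add_neg]) (hb _) with hS | hS
        · rw [← hSm, hS]; trivial
        · obtain ⟨z, hz⟩ := hS (Matrix.single i j 1) (by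
            rw [hSm, ← hTm, hT]; trivial)
          have := congrFun (congrFun hz i) j
          simp [hij] at this
      rw [eq_top_iff]
      intro x _
      rw [Matrix.matrix_eq_sum_single x]
      refine L.sum_mem fun a _ => L.sum_mem fun b _ => ?_
      have : Matrix.single a b (x a b) =
          (Matrix.single a.1 b.1 (x a b)) ⊗ₖ (Matrix.single a.2 b.2 (1:ℂ)) := by
        rw [Matrix.single_kronecker_single]; simp
      rw [this]; exact all _ _
    · exact hT _ h1
  intro W hW
  rcases isEmpty_or_nonempty m with hm | ⟨⟨i0⟩⟩
  · exact ⟨0, 0, by ext i; exact hm.elim i.1⟩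
  -- diagonal blocks differ by scalars
  have key2 : ∀ i, ∃ z : ℂ, ∀ k l, W (i, k) (i, l) = W (i0, k) (i0, l) + z * (1 : Matrix m m ℂ) k l := by
    intro i
    by_cases hi : i = i0
    · exact ⟨0, by subst hi; simp⟩
    obtain ⟨z, hz⟩ := key _ (hL _ (ha (Matrix.single i i0 1)) _ hW) i i0 hi
    refine ⟨-z, fun k l => ?_⟩
    have := congrFun (congrFun hz k) l
    simp only [Matrix.mul_apply, Fintype.sum_prod_type, Matrix.kroneckerMap_apply,
        Matrix.single_apply, Matrix.one_apply, Matrix.of_apply, Matrix.sub_apply,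
        Matrix.smul_apply, smul_eq_mul] at this
    simp [ite_and] at this
    rw [Matrix.one_apply]
    simp only [mul_ite, mul_one, mul_zero]
    split_ifs at this ⊢ <;> linear_combination -this
  choose zd hzd using key2
  choose zo hzo using key W hW
  refine ⟨Matrix.of fun i j => if h : i = j then zd i else zo i j h,
    Matrix.of fun k l => W (i0, k) (i0, l), ?_⟩
  ext ⟨i, k⟩ ⟨j, l⟩
  simp only [Matrix.add_apply, Matrix.kroneckerMap_apply, Matrix.of_apply]
  by_cases h : i = j
  · subst h
    rw [hzd]; simp; ring
  · have := congrFun (congrFun (hzo i j h) k) l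
    simp only [Matrix.of_apply, Matrix.smul_apply, smul_eq_mul] at this
    rw [this]; simp [h]

end AlgPart

section GatePart
open Kronecker

variable {d : ℕ}

lemma unitary_kron_one {u : Matrix (Fin d) (Fin d) ℂ} (hu : u ∈ unitary (Matrix (Fin d) (Fin d) ℂ)) :
    u ⊗ₖ (1 : Matrix (Fin d) (Fin d) ℂ) ∈ unitary (Matrix (Fin d × Fin d) (Fin d × Fin d) ℂ) :=
  Matrix.kronecker_mem_unitary hu (one_mem _)

lemma unitary_one_kron {u : Matrix (Fin d) (Fin d) ℂ} (hu : u ∈ unitary (Matrix (Fin d) (Fin d) ℂ)) :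
    (1 : Matrix (Fin d) (Fin d) ℂ) ⊗ₖ u ∈ unitary (Matrix (Fin d × Fin d) (Fin d × Fin d) ℂ) :=
  Matrix.kronecker_mem_unitary (one_mem _) hu

lemma dual_left {u : Matrix (Fin d) (Fin d) ℂ} (hu : u ∈ unitary (Matrix (Fin d) (Fin d) ℂ))
    {g : Matrix (Fin d × Fin d) (Fin d × Fin d) ℂ} (hg : g ∈ DualUnitary d) :
    (u ⊗ₖ (1 : Matrix (Fin d) (Fin d) ℂ)) * g ∈ DualUnitary d := by
  refine ⟨mul_mem (unitary_kron_one hu) hg.1, ?_⟩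
  have : reshuffle ((u ⊗ₖ (1 : Matrix (Fin d) (Fin d) ℂ)) * g) =
      ((1 : Matrix (Fin d) (Fin d) ℂ) ⊗ₖ u) * reshuffle g := by
    ext ⟨c, a⟩ ⟨e, b⟩
    simp [reshuffle, Matrix.mul_apply, Fintype.sum_prod_type, Matrix.one_apply]
  rw [this]
  exact mul_mem (unitary_one_kron hu) hg.2

lemma unitary_transpose {n : Type*} [Fintype n] [DecidableEq n] {u : Matrix n n ℂ}
    (hu : u ∈ unitary (Matrix n n ℂ)) : uᵀ ∈ unitary (Matrix n n ℂ) := by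
  rw [Unitary.mem_iff] at hu ⊢
  simp only [Matrix.star_eq_conjTranspose] at hu ⊢
  constructor
  · have := congrArg Matrix.transpose hu.2
    rw [Matrix.transpose_mul, Matrix.transpose_one] at this
    exact this
  · have := congrArg Matrix.transpose hu.1
    rw [Matrix.transpose_mul, Matrix.transpose_one] at this
    exact this

lemma dual_right {u : Matrix (Fin d) (Fin d) ℂ} (hu : u ∈ unitary (Matrix (Fin d) (Fin d) ℂ))
    {g : Matrix (Fin d × Fin d) (Fin d × Fin d) ℂ} (hg : g ∈ DualUnitary d) :
    ((1 : Matrix (Fin d) (Fin d) ℂ) ⊗ₖ u) * g ∈ DualUnitary d := by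
  refine ⟨mul_mem (unitary_one_kron hu) hg.1, ?_⟩
  have : reshuffle (((1 : Matrix (Fin d) (Fin d) ℂ) ⊗ₖ u) * g) =
      reshuffle g * ((1 : Matrix (Fin d) (Fin d) ℂ) ⊗ₖ uᵀ) := by
    ext ⟨c, a⟩ ⟨e, b⟩
    simp [reshuffle, Matrix.mul_apply, Fintype.sum_prod_type, Matrix.one_apply, mul_comm]
  rw [this]
  exact mul_mem hg.2 (unitary_one_kron (unitary_transpose hu))

/-- partial trace of `g (x ⊗ 1) g†` over the second site -/
lemma ptrace_two {g : Matrix (Fin d × Fin d) (Fin d × Fin d) ℂ} (hg : g ∈ DualUnitary d)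
    (x : Matrix (Fin d) (Fin d) ℂ) (a a' : Fin d) :
    ∑ b, (g * (x ⊗ₖ (1 : Matrix (Fin d) (Fin d) ℂ)) * star g) (a, b) (a', b) =
      if a = a' then x.trace else 0 := by
  have h := (Unitary.mem_iff.1 hg.2).2
  have h1 : ∀ c c', ∑ e, ∑ b, g (a, b) (c, e) * star (g (a', b) (c', e)) =
      (1 : Matrix (Fin d × Fin d) (Fin d × Fin d) ℂ) (c, a) (c', a') := by
    intro c c'
    rw [← h]
    simp [Matrix.mul_apply, Fintype.sum_prod_type, reshuffle, Matrix.star_apply]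
  have h2 : ∑ b, (g * (x ⊗ₖ (1 : Matrix (Fin d) (Fin d) ℂ)) * star g) (a, b) (a', b) =
      ∑ c', ∑ c, x c c' * ∑ e, ∑ b, g (a, b) (c, e) * star (g (a', b) (c', e)) := by
    simp only [Matrix.mul_apply, Fintype.sum_prod_type, Matrix.kroneckerMap_apply,
      Matrix.one_apply, Matrix.star_apply, mul_ite, mul_one, mul_zero, Finset.sum_ite_eq',
      Finset.mem_univ, if_true, Finset.sum_mul, Finset.mul_sum]
    rw [Finset.sum_comm]
    refine Finset.sum_congr rfl fun c' _ => ?_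
    rw [Finset.sum_comm]
    rw [Finset.sum_congr rfl fun e _ => Finset.sum_comm]
    rw [Finset.sum_comm]
    refine Finset.sum_congr rfl fun c _ => Finset.sum_congr rfl fun e _ =>
      Finset.sum_congr rfl fun b _ => by ring
  rw [h2]
  simp only [h1, Matrix.one_apply, Prod.mk.injEq, ite_and]
  by_cases h : a = a' <;> simp [h, Matrix.trace]

/-- partial trace of `g (1 ⊗ y) g†` over the first site -/
lemma ptrace_one {g : Matrix (Fin d × Fin d) (Fin d × Fin d) ℂ} (hg : g ∈ DualUnitary d)
    (x : Matrix (Fin d) (Fin d) ℂ) (b b' : Fin d) :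
    ∑ a, (g * ((1 : Matrix (Fin d) (Fin d) ℂ) ⊗ₖ x) * star g) (a, b) (a, b') =
      if b = b' then x.trace else 0 := by
  have h := (Unitary.mem_iff.1 hg.2).1
  have h1 : ∀ e e', ∑ c, ∑ a, star (g (a, b') (c, e')) * g (a, b) (c, e)  =
      (1 : Matrix (Fin d × Fin d) (Fin d × Fin d) ℂ) (e', b') (e, b) := by
    intro c c'
    rw [← h]
    simp [Matrix.mul_apply, Fintype.sum_prod_type, reshuffle, Matrix.star_apply]
  have h2 : ∑ a, (g * ((1 : Matrix (Fin d) (Fin d) ℂ) ⊗ₖ x) * star g) (a, b) (a, b') =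
      ∑ e', ∑ e, x e e' * ∑ c, ∑ a, star (g (a, b') (c, e')) * g (a, b) (c, e) := by
    simp only [Matrix.mul_apply, Fintype.sum_prod_type, Matrix.kroneckerMap_apply,
      Matrix.one_apply, Matrix.star_apply, ite_mul, one_mul, zero_mul, mul_ite, mul_zero,
      Finset.sum_ite_irrel, Finset.sum_const_zero, Finset.sum_ite_eq', Finset.sum_ite_eq,
      Finset.mem_univ, if_true, Finset.sum_mul, Finset.mul_sum]
    rw [Finset.sum_comm]
    rw [Finset.sum_congr rfl fun c _ => Finset.sum_comm]
    rw [Finset.sum_comm]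
    refine Finset.sum_congr rfl fun e' _ => ?_
    rw [Finset.sum_congr rfl fun c _ => Finset.sum_comm]
    rw [Finset.sum_comm]
    refine Finset.sum_congr rfl fun c _ => Finset.sum_congr rfl fun e _ =>
      Finset.sum_congr rfl fun b _ => by ring
  rw [h2]
  simp only [h1, Matrix.one_apply, Prod.mk.injEq, ite_and]
  by_cases h : b = b'
  · subst h
    simp [Matrix.trace]
  · simp [h, Ne.symm h]

lemma local_swap_one (hd : 2 ≤ d) {g : Matrix (Fin d × Fin d) (Fin d × Fin d) ℂ}
    (hg : g ∈ DualUnitary d) (x A B : Matrix (Fin d) (Fin d) ℂ)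
    (h : g * (x ⊗ₖ (1 : Matrix (Fin d) (Fin d) ℂ)) * star g =
      A ⊗ₖ (1 : Matrix (Fin d) (Fin d) ℂ) + (1 : Matrix (Fin d) (Fin d) ℂ) ⊗ₖ B) :
    ∃ B', g * (x ⊗ₖ (1 : Matrix (Fin d) (Fin d) ℂ)) * star g =
      (1 : Matrix (Fin d) (Fin d) ℂ) ⊗ₖ B' := by
  have hd0 : (d : ℂ) ≠ 0 := by exact_mod_cast (by omega : d ≠ 0)
  have hA : A = ((x.trace - B.trace) / d) • (1 : Matrix (Fin d) (Fin d) ℂ) := by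
    ext a a'
    have := ptrace_two hg x a a'
    rw [h] at this
    have e : ∑ b, (A ⊗ₖ (1 : Matrix (Fin d) (Fin d) ℂ) + (1 : Matrix (Fin d) (Fin d) ℂ) ⊗ₖ B)
        (a, b) (a', b) = d * A a a' + (1 : Matrix (Fin d) (Fin d) ℂ) a a' * B.trace := by
      simp [Finset.sum_add_distrib, Finset.mul_sum, Matrix.trace]
    rw [e] at this
    simp only [Matrix.smul_apply, Matrix.one_apply, smul_eq_mul] at this ⊢
    split_ifs at this ⊢
    · field_simp
      linear_combination this
    · simpa [hd0] using this
  refine ⟨((x.trace - B.trace) / d) • 1 + B, ?_⟩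
  rw [h, hA, Matrix.kronecker_add, Matrix.smul_kronecker, Matrix.kronecker_smul]

lemma local_swap_two (hd : 2 ≤ d) {g : Matrix (Fin d × Fin d) (Fin d × Fin d) ℂ}
    (hg : g ∈ DualUnitary d) (x A B : Matrix (Fin d) (Fin d) ℂ)
    (h : g * ((1 : Matrix (Fin d) (Fin d) ℂ) ⊗ₖ x) * star g =
      A ⊗ₖ (1 : Matrix (Fin d) (Fin d) ℂ) + (1 : Matrix (Fin d) (Fin d) ℂ) ⊗ₖ B) :
    ∃ A', g * ((1 : Matrix (Fin d) (Fin d) ℂ) ⊗ₖ x) * star g =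
      A' ⊗ₖ (1 : Matrix (Fin d) (Fin d) ℂ) := by
  have hd0 : (d : ℂ) ≠ 0 := by exact_mod_cast (by omega : d ≠ 0)
  have hB : B = ((x.trace - A.trace) / d) • (1 : Matrix (Fin d) (Fin d) ℂ) := by
    ext a a'
    have := ptrace_one hg x a a'
    rw [h] at this
    have e : ∑ b, (A ⊗ₖ (1 : Matrix (Fin d) (Fin d) ℂ) + (1 : Matrix (Fin d) (Fin d) ℂ) ⊗ₖ B)
        (b, a) (b, a') = d * B a a' + (1 : Matrix (Fin d) (Fin d) ℂ) a a' * A.trace := by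
      simp [Finset.sum_add_distrib, Finset.sum_mul, Finset.mul_sum, Matrix.trace, add_comm, mul_comm]
    rw [e] at this
    simp only [Matrix.smul_apply, Matrix.one_apply, smul_eq_mul] at this ⊢
    split_ifs at this ⊢
    · field_simp
      linear_combination this
    · simpa [hd0] using this
  refine ⟨A + ((x.trace - A.trace) / d) • 1, ?_⟩
  rw [h, hB, Matrix.add_kronecker, Matrix.smul_kronecker, Matrix.kronecker_smul]

/-- gates that exchange the two local algebras -/
def SwapLike (g : Matrix (Fin d × Fin d) (Fin d × Fin d) ℂ) : Prop :=
  (∀ x : Matrix (Fin d) (Fin d) ℂ, ∃ B, g * (x ⊗ₖ (1 : Matrix (Fin d) (Fin d) ℂ)) * star g =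
      (1 : Matrix (Fin d) (Fin d) ℂ) ⊗ₖ B) ∧
  (∀ x : Matrix (Fin d) (Fin d) ℂ, ∃ A, g * ((1 : Matrix (Fin d) (Fin d) ℂ) ⊗ₖ x) * star g =
      A ⊗ₖ (1 : Matrix (Fin d) (Fin d) ℂ))

lemma swapLike_phase {g : Matrix (Fin d × Fin d) (Fin d × Fin d) ℂ}
    (hg : g ∈ DualUnitary d) (hs : SwapLike g) (φ : Fin d × Fin d → ℂ)
    (hφ : ∀ p, φ p * star (φ p) = 1) : g * Matrix.diagonal φ ∈ DualUnitary d := by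
  refine ⟨mul_mem hg.1 ?_, ?_⟩
  · have h1 : Matrix.diagonal φ * star (Matrix.diagonal φ) = 1 := by
      rw [Matrix.star_eq_conjTranspose, Matrix.diagonal_conjTranspose, Matrix.diagonal_mul_diagonal,
        ← Matrix.diagonal_one]
      congr 1
      ext p
      exact hφ p
    rw [Unitary.mem_iff]
    exact ⟨mul_eq_one_comm.1 h1, h1⟩
  · have h1 : reshuffle (g * Matrix.diagonal φ) * star (reshuffle (g * Matrix.diagonal φ)) = 1 := by
      ext ⟨c, a⟩ ⟨c', a'⟩
      have e1 : (reshuffle (g * Matrix.diagonal φ) * star (reshuffle (g * Matrix.diagonal φ)))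
          (c, a) (c', a') = ∑ e, ∑ b, g (a, b) (c, e) * (φ (c, e) * star (φ (c', e))) *
            star (g (a', b) (c', e)) := by
        rw [Matrix.mul_apply]
        simp only [Fintype.sum_prod_type, reshuffle, Matrix.star_apply,
          Matrix.mul_diagonal, star_mul]
        refine Finset.sum_congr rfl fun e _ => Finset.sum_congr rfl fun b _ => ?_
        ring
      rw [e1]
      by_cases hc : c = c'
      · subst hc
        simp only [hφ, mul_one]
        rw [← (Unitary.mem_iff.1 hg.2).2]
        simp [Matrix.mul_apply, Fintype.sum_prod_type, reshuffle, Matrix.star_apply]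
      · obtain ⟨B, hB⟩ := hs.1 (Matrix.single c c' 1)
        obtain ⟨A, hA⟩ := hs.2 (Matrix.diagonal fun e => φ (c, e) * star (φ (c', e)))
        have hBt : B.trace = 0 := by
          have := ptrace_two hg (Matrix.single c c' 1) a a
          rw [hB] at this
          simpa [Matrix.trace, hc] using this
        have e2 : g * (Matrix.single c c' 1 ⊗ₖ
            (Matrix.diagonal fun e => φ (c, e) * star (φ (c', e)))) * star g = A ⊗ₖ B := by
          have h3 : A ⊗ₖ B = ((1 : Matrix (Fin d) (Fin d) ℂ) ⊗ₖ B) *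
              (A ⊗ₖ (1 : Matrix (Fin d) (Fin d) ℂ)) := by
            rw [← Matrix.mul_kronecker_mul]; simp
          rw [h3, ← hB, ← hA]
          have h4 : (Matrix.single c c' (1:ℂ) ⊗ₖ
            (Matrix.diagonal fun e => φ (c, e) * star (φ (c', e)))) =
            (Matrix.single c c' (1:ℂ) ⊗ₖ (1 : Matrix (Fin d) (Fin d) ℂ)) * 
            ((1 : Matrix (Fin d) (Fin d) ℂ) ⊗ₖ
              (Matrix.diagonal fun e => φ (c, e) * star (φ (c', e)))) := by
            rw [← Matrix.mul_kronecker_mul]; simp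
          rw [h4]
          have h5 := (Unitary.mem_iff.1 hg.1).1
          simp only [mul_assoc]
          rw [← mul_assoc (star g) g, h5, one_mul]
        have e3 : ∑ b, (A ⊗ₖ B) (a, b) (a', b) = 0 := by
          simp only [Matrix.kroneckerMap_apply, ← Finset.mul_sum]
          rw [show ∑ i, B i i = B.trace from rfl, hBt, mul_zero]
        rw [← e2] at e3
        rw [Matrix.one_apply_ne (by simp [hc]), ← e3, Finset.sum_comm]
        refine Finset.sum_congr rfl fun b _ => ?_
        simp only [Matrix.mul_apply, Fintype.sum_prod_type, Matrix.kroneckerMap_apply,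
          Matrix.single_apply, Matrix.diagonal_apply, Matrix.star_apply]
        simp [ite_and, Finset.sum_ite_irrel, mul_assoc]
    rw [Unitary.mem_iff]
    exact ⟨mul_eq_one_comm.1 h1, h1⟩

lemma exists_not_swapLike (hd : 2 ≤ d) {G V : Set (Matrix (Fin d × Fin d) (Fin d × Fin d) ℂ)}
    (hne : G.Nonempty) (hV : IsOpen V) (hG : G = DualUnitary d ∩ V) :
    ∃ g ∈ G, ¬ SwapLike g := by
  by_contra! hall
  obtain ⟨g, hgG⟩ := hne
  have hg : g ∈ DualUnitary d ∩ V := hG ▸ hgG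
  let i0 : Fin d := ⟨0, by omega⟩
  let i1 : Fin d := ⟨1, by omega⟩
  have h01 : i0 ≠ i1 := by simp [i0, i1]
  let φ : ℝ → Fin d × Fin d → ℂ := fun t p => if p = (i0, i0) then Complex.exp (t * Complex.I) else 1
  have hφ : ∀ t p, φ t p * star (φ t p) = 1 := by
    intro t p
    simp only [φ]
    split_ifs
    · rw [RCLike.star_def, Complex.mul_conj, Complex.normSq_eq_norm_sq, Complex.norm_exp_ofReal_mul_I]; simp
    · simp
  have hcont : Continuous fun t : ℝ => g * Matrix.diagonal (φ t) := by
    refine continuous_const.matrix_mul (Continuous.matrix_diagonal ?_)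
    refine continuous_pi fun p => ?_
    simp only [φ]
    split_ifs <;> fun_prop
  have h0 : g * Matrix.diagonal (φ 0) = g := by
    have : φ 0 = fun _ => 1 := by ext p; simp [φ]
    rw [this, Matrix.diagonal_one, mul_one]
  have hev : ∀ᶠ t in nhdsWithin (0:ℝ) (Set.Ioi 0), g * Matrix.diagonal (φ t) ∈ V := by
    apply mem_nhdsWithin_of_mem_nhds
    exact hcont.continuousAt.preimage_mem_nhds (by rw [h0]; exact hV.mem_nhds hg.2)
  have hev2 : ∀ᶠ t in nhdsWithin (0:ℝ) (Set.Ioi 0), t ∈ Set.Ioo 0 Real.pi :=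
    Ioo_mem_nhdsGT Real.pi_pos
  obtain ⟨t, htV, ht⟩ := (hev.and hev2).exists
  have hz : Complex.exp (t * Complex.I) ≠ 1 := by
    intro h
    have := congrArg Complex.im h
    rw [Complex.exp_ofReal_mul_I_im, Complex.one_im] at this
    exact (Real.sin_pos_of_pos_of_lt_pi ht.1 ht.2).ne' this
  have hsw := hall g hgG
  have hsw2 : SwapLike (g * Matrix.diagonal (φ t)) :=
    hall _ (by rw [hG]; exact ⟨swapLike_phase hg.1 hsw _ (hφ t), htV⟩)
  obtain ⟨B, hB⟩ := hsw2.1 (Matrix.single i0 i1 1)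
  obtain ⟨A, hA⟩ := hsw.2 (Matrix.single i0 i1 1)
  have h5 := (Unitary.mem_iff.1 hg.1.1).1
  have hcomm : ((1 : Matrix (Fin d) (Fin d) ℂ) ⊗ₖ B) * (A ⊗ₖ (1 : Matrix (Fin d) (Fin d) ℂ)) =
      (A ⊗ₖ (1 : Matrix (Fin d) (Fin d) ℂ)) * ((1 : Matrix (Fin d) (Fin d) ℂ) ⊗ₖ B) := by
    rw [← Matrix.mul_kronecker_mul, ← Matrix.mul_kronecker_mul]; simp
  rw [← hA, ← hB] at hcomm
  have hcomm2 := congrArg (fun W => star g * W * g) hcomm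
  have cancel : ∀ X Y : Matrix (Fin d × Fin d) (Fin d × Fin d) ℂ,
      star g * ((g * X * star g) * (g * Y * star g)) * g = X * Y := by
    intro X Y
    calc _ = (star g * g) * X * (star g * g) * Y * (star g * g) := by simp only [mul_assoc]
      _ = _ := by rw [h5]; simp
  have e1 : g * Matrix.diagonal (φ t) * (Matrix.single i0 i1 1 ⊗ₖ (1 : Matrix (Fin d) (Fin d) ℂ)) *
      star (g * Matrix.diagonal (φ t)) = g * (Matrix.diagonal (φ t) *
        (Matrix.single i0 i1 1 ⊗ₖ (1 : Matrix (Fin d) (Fin d) ℂ)) * star (Matrix.diagonal (φ t))) * star g := by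
    simp only [star_mul, mul_assoc]
  rw [e1] at hcomm2
  simp only [cancel] at hcomm2
  have := congrFun (congrFun hcomm2 (i0, i0)) (i1, i1)
  rw [Matrix.star_eq_conjTranspose, Matrix.diagonal_conjTranspose] at this
  rw [mul_assoc, mul_assoc, Matrix.diagonal_mul] at this
  simp only [Matrix.mul_apply, Fintype.sum_prod_type, Matrix.kroneckerMap_apply,
          Matrix.single_apply, Matrix.one_apply, Matrix.diagonal_apply, Pi.star_apply] at this
  simp [ite_and, φ, h01, h01.symm, Finset.sum_ite_irrel] at this
  exact hz this

lemma gate_top (hd : 2 ≤ d) {G V : Set (Matrix (Fin d × Fin d) (Fin d × Fin d) ℂ)}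
    (hne : G.Nonempty) (hV : IsOpen V) (hG : G = DualUnitary d ∩ V)
    (L : Submodule ℂ (Matrix (Fin d × Fin d) (Fin d × Fin d) ℂ))
    (hL : ∀ x ∈ L, ∀ y ∈ L, x * y - y * x ∈ L)
    (ha : ∀ a : Matrix (Fin d) (Fin d) ℂ, a ⊗ₖ (1 : Matrix (Fin d) (Fin d) ℂ) ∈ L)
    (hb : ∀ b : Matrix (Fin d) (Fin d) ℂ, (1 : Matrix (Fin d) (Fin d) ℂ) ⊗ₖ b ∈ L)
    (hinv : ∀ g ∈ G, ∀ W ∈ L, g * W * star g ∈ L) : L = ⊤ := by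
  rcases two_site L hL ha hb with h | h
  · exact h
  exfalso
  obtain ⟨g, hg, hns⟩ := exists_not_swapLike hd hne hV hG
  have hgd : g ∈ DualUnitary d := (hG ▸ hg : g ∈ DualUnitary d ∩ V).1
  apply hns
  constructor
  · intro x
    obtain ⟨A, B, hAB⟩ := h _ (hinv g hg _ (ha x))
    exact local_swap_one hd hgd x A B hAB
  · intro x
    obtain ⟨A, B, hAB⟩ := h _ (hinv g hg _ (hb x))
    exact local_swap_two hd hgd x A B hAB

end GatePart

section EmbPart
open Kronecker

variable {d N : ℕ}

/-- operator acting as `f` on the sites of `S` and trivially elsewhere -/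
def opOn (S : Finset (Fin N)) (f : (Fin N → Fin d) → (Fin N → Fin d) → ℂ) :
    Matrix (Fin N → Fin d) (Fin N → Fin d) ℂ :=
  fun r c => if ∀ s, s ∉ S → r s = c s then f r c else 0

lemma opOn_mul {S T : Finset (Fin N)} (hST : Disjoint S T)
    {f g : (Fin N → Fin d) → (Fin N → Fin d) → ℂ}
    (hf : ∀ r c c', (∀ s ∈ S, c s = c' s) → f r c = f r c')
    (hg : ∀ r r' c, (∀ s ∈ T, r s = r' s) → g r c = g r' c) :
    opOn S f * opOn T g = opOn (S ∪ T) (fun r c => f r c * g r c) := by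
  ext r c
  rw [Matrix.mul_apply]
  rw [Finset.sum_eq_single (fun s => if s ∈ S then c s else r s)]
  · have h1 : ∀ s, s ∉ S → r s = (if s ∈ S then c s else r s) := by
      intro s hs; simp [hs]
    have h2 : f r (fun s => if s ∈ S then c s else r s) = f r c :=
      hf _ _ _ (by intro s hs; simp [hs])
    have h3 : g (fun s => if s ∈ S then c s else r s) c = g r c :=
      hg _ _ _ (by
        intro s hs
        have : s ∉ S := fun h => (Finset.disjoint_left.1 hST h hs)
        simp [this])
    have h4 : (∀ s, s ∉ T → (if s ∈ S then c s else r s) = c s) ↔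
        (∀ s, s ∉ S ∪ T → r s = c s) := by
      constructor
      · intro h s hs
        simp only [Finset.mem_union, not_or] at hs
        have := h s hs.2
        rwa [if_neg hs.1] at this
      · intro h s hs
        by_cases hS : s ∈ S
        · simp [hS]
        · rw [if_neg hS]; exact h s (by simp [hS, hs])
    simp only [opOn]
    rw [if_pos h1, h2, h3]
    simp only [h4, mul_ite, mul_zero]
  · intro k _ hk
    simp only [opOn]
    by_cases h1 : ∀ s, s ∉ S → r s = k s
    · by_cases h2 : ∀ s, s ∉ T → k s = c s
      · exfalso
        apply hk
        funext s
        by_cases hS : s ∈ S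
        · rw [if_pos hS]; exact h2 s (Finset.disjoint_left.1 hST hS)
        · rw [if_neg hS]; exact (h1 s hS).symm
      · rw [if_neg h2, mul_zero]
    · rw [if_neg h1, zero_mul]
  · simp

variable {J : Type*} [Fintype J] [DecidableEq J]

/-- coordinate splitting -/
def splitMap (S : Finset (Fin N)) (π : (Fin N → Fin d) → J) (r : Fin N → Fin d) :
    J × ({s : Fin N // s ∉ S} → Fin d) := (π r, fun s => r s)

lemma emb_eq (S : Finset (Fin N)) (π : (Fin N → Fin d) → J)
    (hb : Function.Bijective (splitMap S π)) (X : Matrix J J ℂ) :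
    opOn S (fun r c => X (π r) (π c)) =
      (X ⊗ₖ (1 : Matrix ({s : Fin N // s ∉ S} → Fin d) ({s : Fin N // s ∉ S} → Fin d) ℂ)).submatrix
        (Equiv.ofBijective _ hb) (Equiv.ofBijective _ hb) := by
  ext r c
  simp only [opOn, Matrix.submatrix_apply, Matrix.kroneckerMap_apply, Equiv.ofBijective_apply,
    splitMap, Matrix.one_apply, mul_ite, mul_one, mul_zero, funext_iff, Subtype.forall]

/-- the embedding of operators on a block of sites -/
def emb (S : Finset (Fin N)) (π : (Fin N → Fin d) → J)
    (hb : Function.Bijective (splitMap S π)) :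
    Matrix J J ℂ →⋆ₐ[ℂ] Matrix (Fin N → Fin d) (Fin N → Fin d) ℂ where
  toFun X := opOn S (fun r c => X (π r) (π c))
  map_one' := by
    rw [emb_eq S π hb, Matrix.one_kronecker_one, Matrix.submatrix_one_equiv]
  map_mul' X Y := by
    rw [emb_eq S π hb, emb_eq S π hb, emb_eq S π hb, Matrix.submatrix_mul_equiv,
      ← Matrix.mul_kronecker_mul, one_mul]
  map_zero' := by
    rw [emb_eq S π hb]; simp
  map_add' X Y := by
    rw [emb_eq S π hb, emb_eq S π hb, emb_eq S π hb, Matrix.add_kronecker]; rfl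
  commutes' z := by
    rw [emb_eq S π hb, Algebra.algebraMap_eq_smul_one, Algebra.algebraMap_eq_smul_one,
      Matrix.smul_kronecker, Matrix.one_kronecker_one, Matrix.submatrix_smul]
    simp only [Pi.smul_apply, Matrix.submatrix_one_equiv]
  map_star' X := by
    rw [emb_eq S π hb, emb_eq S π hb, Matrix.star_eq_conjTranspose, Matrix.star_eq_conjTranspose,
      Matrix.conjTranspose_submatrix, Matrix.conjTranspose_kronecker, Matrix.conjTranspose_one]

lemma emb_apply (S : Finset (Fin N)) (π : (Fin N → Fin d) → J)
    (hb : Function.Bijective (splitMap S π)) (X : Matrix J J ℂ) :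
    emb S π hb X = opOn S (fun r c => X (π r) (π c)) := rfl

lemma site_bij (k : Fin N) : Function.Bijective
    (splitMap (d := d) {k} (fun r => r k)) := by
  constructor
  · intro r r' h
    simp only [splitMap, Prod.mk.injEq, funext_iff, Subtype.forall, Finset.mem_singleton] at h
    funext s
    by_cases hs : s = k
    · rw [hs]; exact h.1
    · exact h.2 s hs
  · rintro ⟨a, f⟩
    refine ⟨fun s => if h : s = k then a else f ⟨s, by simpa using h⟩, ?_⟩
    simp only [splitMap, Prod.mk.injEq, funext_iff, Subtype.forall, Finset.mem_singleton]
    refine ⟨by simp, fun s hs => by simp [hs]⟩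

lemma pair_bij (p : Fin N × Fin N) (hp : p.1 ≠ p.2) : Function.Bijective
    (splitMap (d := d) {p.1, p.2} (fun r => (r p.1, r p.2))) := by
  constructor
  · intro r r' h
    simp only [splitMap, Prod.mk.injEq, funext_iff, Subtype.forall, Finset.mem_singleton,
      Finset.mem_insert, not_or] at h
    funext s
    by_cases hs : s = p.1
    · rw [hs]; exact h.1.1
    by_cases hs2 : s = p.2
    · rw [hs2]; exact h.1.2
    · exact h.2 s ⟨hs, hs2⟩
  · rintro ⟨⟨a, b⟩, f⟩
    refine ⟨fun s => if h : s = p.1 then a else if h2 : s = p.2 then b else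
      f ⟨s, by simp [h, h2]⟩, ?_⟩
    simp only [splitMap, Prod.mk.injEq, funext_iff, Subtype.forall, Finset.mem_singleton,
      Finset.mem_insert, not_or]
    refine ⟨by simp [hp.symm], fun s hs => by simp [hs]⟩

/-- the first `k` sites -/
def lowS (N k : ℕ) : Finset (Fin N) := Finset.univ.filter (fun s => (s : ℕ) < k)

lemma mem_lowS {k : ℕ} {s : Fin N} : s ∈ lowS N k ↔ (s : ℕ) < k := by simp [lowS]

lemma low_bij (k : ℕ) : Function.Bijective
    (splitMap (d := d) (lowS N k) (fun r => fun s : {s : Fin N // s ∈ lowS N k} => r s)) := by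
  constructor
  · intro r r' h
    simp only [splitMap, Prod.mk.injEq, funext_iff, Subtype.forall] at h
    funext s
    by_cases hs : s ∈ lowS N k
    · exact h.1 s hs
    · exact h.2 s hs
  · rintro ⟨a, f⟩
    refine ⟨fun s => if h : s ∈ lowS N k then a ⟨s, h⟩ else f ⟨s, h⟩, ?_⟩
    simp only [splitMap, Prod.mk.injEq, funext_iff, Subtype.forall]
    refine ⟨fun s hs => by simp [hs], fun s hs => by simp [hs]⟩

/-- one-site embedding -/
def site (k : Fin N) : Matrix (Fin d) (Fin d) ℂ →⋆ₐ[ℂ] Matrix (Fin N → Fin d) (Fin N → Fin d) ℂ :=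
  emb {k} (fun r => r k) (site_bij k)

/-- two-site embedding -/
def pairE (p : Fin N × Fin N) (hp : p.1 ≠ p.2) :
    Matrix (Fin d × Fin d) (Fin d × Fin d) ℂ →⋆ₐ[ℂ] Matrix (Fin N → Fin d) (Fin N → Fin d) ℂ :=
  emb {p.1, p.2} (fun r => (r p.1, r p.2)) (pair_bij p hp)

/-- embedding of operators on the first `k` sites -/
def lowE (k : ℕ) : Matrix ({s : Fin N // s ∈ lowS N k} → Fin d) ({s : Fin N // s ∈ lowS N k} → Fin d) ℂ
    →⋆ₐ[ℂ] Matrix (Fin N → Fin d) (Fin N → Fin d) ℂ :=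
  emb (lowS N k) (fun r => fun s => r s) (low_bij k)

lemma pairE_left (p : Fin N × Fin N) (hp : p.1 ≠ p.2) (a : Matrix (Fin d) (Fin d) ℂ) :
    pairE p hp (a ⊗ₖ (1 : Matrix (Fin d) (Fin d) ℂ)) = site p.1 a := by
  ext r c
  simp only [pairE, site, emb_apply, opOn, Matrix.kroneckerMap_apply, Matrix.one_apply, mul_ite,
    mul_one, mul_zero]
  rw [← ite_and]
  congr 1
  simp only [Finset.mem_singleton, Finset.mem_insert, not_or, eq_iff_iff]
  constructor
  · rintro ⟨h1, h2⟩ s hs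
    by_cases h : s = p.2
    · rw [h]; exact h2
    · exact h1 s ⟨hs, h⟩
  · intro h
    exact ⟨fun s hs => h s hs.1, h _ hp.symm⟩

lemma pairE_right (p : Fin N × Fin N) (hp : p.1 ≠ p.2) (a : Matrix (Fin d) (Fin d) ℂ) :
    pairE p hp ((1 : Matrix (Fin d) (Fin d) ℂ) ⊗ₖ a) = site p.2 a := by
  ext r c
  simp only [pairE, site, emb_apply, opOn, Matrix.kroneckerMap_apply, Matrix.one_apply, ite_mul,
    one_mul, zero_mul]
  rw [← ite_and]
  congr 1
  simp only [Finset.mem_singleton, Finset.mem_insert, not_or, eq_iff_iff]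
  constructor
  · rintro ⟨h1, h2⟩ s hs
    by_cases h : s = p.1
    · rw [h]; exact h2
    · exact h1 s ⟨h, hs⟩
  · intro h
    exact ⟨fun s hs => h s hs.2, h _ hp⟩

/-- pairs in `P` are nondegenerate and pairwise disjoint -/
def PairDisj (P : Finset (Fin N × Fin N)) : Prop :=
  (∀ p ∈ P, p.1 ≠ p.2) ∧
  ∀ p ∈ P, ∀ q ∈ P, p ≠ q → Disjoint ({p.1, p.2} : Finset (Fin N)) {q.1, q.2}

lemma pairDisj_even : PairDisj (evenPairs N) := by
  constructor
  · intro p hp h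
    simp only [evenPairs, Finset.mem_filter] at hp
    rw [h] at hp; omega
  · intro p hp q hq hpq
    simp only [evenPairs, Finset.mem_filter] at hp hq
    have : (p.1 : ℕ) ≠ q.1 := by
      intro h; apply hpq; ext <;> omega
    rw [Finset.disjoint_left]
    simp only [Finset.mem_insert, Finset.mem_singleton, Fin.ext_iff]
    intro a; omega

lemma pairDisj_odd : PairDisj (oddPairs N) := by
  constructor
  · intro p hp h
    simp only [oddPairs, Finset.mem_filter] at hp
    rw [h] at hp; omega
  · intro p hp q hq hpq
    simp only [oddPairs, Finset.mem_filter] at hp hq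
    have : (p.1 : ℕ) ≠ q.1 := by
      intro h; apply hpq; ext <;> omega
    rw [Finset.disjoint_left]
    simp only [Finset.mem_insert, Finset.mem_singleton, Fin.ext_iff]
    intro a; omega

/-- support of a family of pairs -/
def supp (P : Finset (Fin N × Fin N)) : Finset (Fin N) := P.biUnion fun p => {p.1, p.2}

lemma mem_supp {P : Finset (Fin N × Fin N)} {s : Fin N} :
    s ∈ supp P ↔ ∃ p ∈ P, s = p.1 ∨ s = p.2 := by simp [supp]

lemma layer_eq (P : Finset (Fin N × Fin N))
    (u : Fin N × Fin N → Matrix (Fin d × Fin d) (Fin d × Fin d) ℂ) :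
    layerMatrix d N P u =
      opOn (supp P) (fun r c => ∏ p ∈ P, u p (r p.1, r p.2) (c p.1, c p.2)) := by
  ext r c
  simp only [layerMatrix, opOn, Finset.prod_ite_zero, Finset.prod_const_one, mul_ite, mul_one,
    mul_zero, Finset.mem_filter, Finset.mem_univ, true_and, mem_supp, not_exists, not_and, not_or]

lemma layer_erase {P : Finset (Fin N × Fin N)} (hP : PairDisj P) {p : Fin N × Fin N} (hp : p ∈ P)
    (u : Fin N × Fin N → Matrix (Fin d × Fin d) (Fin d × Fin d) ℂ) :
    layerMatrix d N P u = pairE p (hP.1 p hp) (u p) * layerMatrix d N (P.erase p) u := by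
  rw [layer_eq, layer_eq, pairE, emb_apply, opOn_mul]
  · have h1 : supp P = {p.1, p.2} ∪ supp (P.erase p) := by
      conv_lhs => rw [← Finset.insert_erase hp]
      simp [supp, Finset.biUnion_insert]
    rw [h1]
    congr 1
    funext r c
    rw [Finset.mul_prod_erase P (fun p => u p (r p.1, r p.2) (c p.1, c p.2)) hp]
  · rw [supp, Finset.disjoint_biUnion_right]
    intro q hq
    rw [Finset.mem_erase] at hq
    exact hP.2 p hp q hq.2 hq.1.symm
  · intro r c c' h
    rw [h p.1 (by simp), h p.2 (by simp)]
  · intro r r' c h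
    refine Finset.prod_congr rfl fun q hq => ?_
    rw [h q.1 (mem_supp.2 ⟨q, hq, Or.inl rfl⟩), h q.2 (mem_supp.2 ⟨q, hq, Or.inr rfl⟩)]

lemma layer_comm {P : Finset (Fin N × Fin N)} (hP : PairDisj P) {p : Fin N × Fin N} (hp : p ∈ P)
    (u : Fin N × Fin N → Matrix (Fin d × Fin d) (Fin d × Fin d) ℂ)
    (W : Matrix (Fin d × Fin d) (Fin d × Fin d) ℂ) :
    pairE p (hP.1 p hp) W * layerMatrix d N (P.erase p) u =
      layerMatrix d N (P.erase p) u * pairE p (hP.1 p hp) W := by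
  have hdis : Disjoint ({p.1, p.2} : Finset (Fin N)) (supp (P.erase p)) := by
    rw [supp, Finset.disjoint_biUnion_right]
    intro q hq
    rw [Finset.mem_erase] at hq
    exact hP.2 p hp q hq.2 hq.1.symm
  rw [layer_eq, pairE, emb_apply, opOn_mul hdis, opOn_mul hdis.symm, Finset.union_comm]
  · simp only [mul_comm]
  · intro r c c' h
    refine Finset.prod_congr rfl fun q hq => ?_
    rw [h q.1 (mem_supp.2 ⟨q, hq, Or.inl rfl⟩), h q.2 (mem_supp.2 ⟨q, hq, Or.inr rfl⟩)]
  · intro r c c' h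
    rw [h p.1 (by simp), h p.2 (by simp)]
  · intro r c c' h
    rw [h p.1 (by simp), h p.2 (by simp)]
  · intro r r' c h
    refine Finset.prod_congr rfl fun q hq => ?_
    rw [h q.1 (mem_supp.2 ⟨q, hq, Or.inl rfl⟩), h q.2 (mem_supp.2 ⟨q, hq, Or.inr rfl⟩)]

lemma layer_empty (u : Fin N × Fin N → Matrix (Fin d × Fin d) (Fin d × Fin d) ℂ) :
    layerMatrix d N ∅ u = 1 := by
  rw [layer_eq]
  ext r c
  simp [opOn, supp, Matrix.one_apply, funext_iff]

lemma pairE_unitary (p : Fin N × Fin N) (hp : p.1 ≠ p.2)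
    {W : Matrix (Fin d × Fin d) (Fin d × Fin d) ℂ} (hW : W ∈ unitary _) :
    pairE p hp W ∈ unitary (Matrix (Fin N → Fin d) (Fin N → Fin d) ℂ) := by
  rw [Unitary.mem_iff] at hW ⊢
  rw [← map_star, ← map_mul, ← map_mul, hW.1, hW.2, map_one]
  exact ⟨rfl, rfl⟩

lemma PairDisj.erase {P : Finset (Fin N × Fin N)} (hP : PairDisj P) (p : Fin N × Fin N) :
    PairDisj (P.erase p) :=
  ⟨fun q hq => hP.1 q (Finset.mem_of_mem_erase hq),
    fun q hq q' hq' => hP.2 q (Finset.mem_of_mem_erase hq) q' (Finset.mem_of_mem_erase hq')⟩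

lemma layer_unitary (n : ℕ) : ∀ (P : Finset (Fin N × Fin N)), P.card = n → PairDisj P →
    ∀ (u : Fin N × Fin N → Matrix (Fin d × Fin d) (Fin d × Fin d) ℂ),
    (∀ p ∈ P, u p ∈ unitary (Matrix (Fin d × Fin d) (Fin d × Fin d) ℂ)) →
    layerMatrix d N P u ∈ unitary (Matrix (Fin N → Fin d) (Fin N → Fin d) ℂ) := by
  induction n with
  | zero =>
    intro P hP _ u _
    rw [Finset.card_eq_zero] at hP
    rw [hP, layer_empty]; exact one_mem _
  | succ n ih =>
    intro P hcard hP u hu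
    obtain ⟨p, hp⟩ : P.Nonempty := by rw [← Finset.card_pos]; omega
    rw [layer_erase hP hp]
    refine mul_mem (pairE_unitary _ _ (hu p hp)) (ih _ ?_ (hP.erase p) u fun q hq =>
      hu q (Finset.mem_of_mem_erase hq))
    rw [Finset.card_erase_of_mem hp, hcard]; rfl

lemma low_site_comm {k : Fin N} (e : Matrix (Fin d) (Fin d) ℂ)
    (y : Matrix ({s : Fin N // s ∈ lowS N k} → Fin d) ({s : Fin N // s ∈ lowS N k} → Fin d) ℂ) :
    lowE k y * site k e = site k e * lowE k y := by
  have hdis : Disjoint (lowS N k) {k} := by simp [mem_lowS]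
  have hlow : ∀ c c' : Fin N → Fin d, (∀ s ∈ lowS N k, c s = c' s) →
      (fun s : {s : Fin N // s ∈ lowS N k} => c s) =
        fun s : {s : Fin N // s ∈ lowS N k} => c' s := by
    intro c c' h; funext s; exact h s s.2
  rw [lowE, site, emb_apply, emb_apply, opOn_mul hdis, opOn_mul hdis.symm, Finset.union_comm]
  · simp only [mul_comm]
  · intro r c c' h; simp [h k]
  · intro r c c' h; simp only [hlow _ _ h]
  · intro r c c' h; simp only [hlow _ _ h]
  · intro r c c' h; simp [h k]

lemma low_site_apply {k : Fin N} (e : Matrix (Fin d) (Fin d) ℂ)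
    (y : Matrix ({s : Fin N // s ∈ lowS N k} → Fin d) ({s : Fin N // s ∈ lowS N k} → Fin d) ℂ) :
    lowE k y * site k e = opOn (lowS N (k + 1)) (fun r c => y (fun s => r s) (fun s => c s) *
      e (r k) (c k)) := by
  have hdis : Disjoint (lowS N k) {k} := by simp [mem_lowS]
  have hlow : ∀ c c' : Fin N → Fin d, (∀ s ∈ lowS N k, c s = c' s) →
      (fun s : {s : Fin N // s ∈ lowS N k} => c s) =
        fun s : {s : Fin N // s ∈ lowS N k} => c' s := by
    intro c c' h; funext s; exact h s s.2
  rw [lowE, site, emb_apply, emb_apply, opOn_mul hdis]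
  · congr 1
    ext s
    simp only [Finset.mem_union, mem_lowS, Finset.mem_singleton, Fin.ext_iff]; omega
  · intro r c c' h; simp only [hlow _ _ h]
  · intro r c c' h; simp [h k]

/-- growth step -/
lemma growth_step (hd : 2 ≤ d) (L : Submodule ℂ (Matrix (Fin N → Fin d) (Fin N → Fin d) ℂ))
    (hL : ∀ x ∈ L, ∀ y ∈ L, x * y - y * x ∈ L) (j k : Fin N) (hjk : (k : ℕ) = j + 1)
    (hp : ∀ W, pairE (d := d) (j, k) (by intro h; simp only at h; omega) W ∈ L)
    (hlow : ∀ y, lowE (d := d) (N := N) k y ∈ L) : ∀ y, lowE (d := d) (N := N) (k + 1) y ∈ L := by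
  have hne : (j, k).1 ≠ (j, k).2 := by intro h; simp only at h; omega
  have hjlow : j ∈ lowS N k := by rw [mem_lowS]; omega
  let i0 : Fin d := ⟨0, by omega⟩
  let i1 : Fin d := ⟨1, by omega⟩
  have h01 : i0 ≠ i1 := by simp [i0, i1]
  have hT : ∀ e : Matrix (Fin d) (Fin d) ℂ, ∀ y, lowE (d := d) (N := N) k y * site k e ∈ L := by
    intro e
    let T : Submodule ℂ (Matrix ({s : Fin N // s ∈ lowS N k} → Fin d)
        ({s : Fin N // s ∈ lowS N k} → Fin d) ℂ) :=
      L.comap ((LinearMap.mulRight ℂ (site k e)) ∘ₗ (lowE (d := d) (N := N) k).toAlgHom.toLinearMap)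
    have hTm : ∀ y, y ∈ T ↔ lowE k y * site k e ∈ L := fun y => Iff.rfl
    rcases ideal_lemma T (fun x y hy => by
        rw [hTm] at hy ⊢
        have := hL _ (hlow x) _ hy
        rw [mul_assoc (lowE k y), ← low_site_comm, ← mul_assoc, ← mul_assoc, ← map_mul, ← map_mul,
          ← sub_mul, ← map_sub] at this
        exact this) (by
        rw [hTm, map_one, one_mul, ← pairE_right (j, k) hne]
        exact hp _) with h | h
    · intro y; rw [← hTm, h]; trivial
    · exfalso
      -- the operator E01 at site j
      let y : Matrix ({s : Fin N // s ∈ lowS N k} → Fin d)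
          ({s : Fin N // s ∈ lowS N k} → Fin d) ℂ := fun r c =>
        if ∀ s, s ≠ ⟨j, hjlow⟩ → r s = c s then
          (Matrix.single i0 i1 (1 : ℂ)) (r ⟨j, hjlow⟩) (c ⟨j, hjlow⟩) else 0
      have hy : y ∈ T := by
        have e1 : lowE k y * site k e = pairE (j, k) hne (Matrix.single i0 i1 (1 : ℂ) ⊗ₖ e) := by
          rw [low_site_apply, pairE, emb_apply]
          ext r c
          simp only [opOn, y, ite_mul, zero_mul, Matrix.kroneckerMap_apply]
          rw [← ite_and]
          congr 1
          simp only [eq_iff_iff, mem_lowS, Finset.mem_insert, Finset.mem_singleton, not_or]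
          constructor
          · rintro ⟨h1, h2⟩ s ⟨hs1, hs2⟩
            by_cases hs : (s : ℕ) < k
            · exact h2 ⟨s, mem_lowS.2 hs⟩ (by simpa using hs1)
            · refine h1 s ?_
              intro h
              apply hs2
              ext; omega
          · intro h
            constructor
            · intro s hs
              refine h s ⟨?_, ?_⟩
              · rintro rfl; omega
              · rintro rfl; omega
            · rintro ⟨s, hs⟩ hsj
              rw [mem_lowS] at hs
              refine h s ⟨?_, ?_⟩
              · rintro rfl; exact hsj rfl
              · rintro rfl; omega
        rw [hTm, e1]; exact hp _
      obtain ⟨z, hz⟩ := h y hy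
      have := congrFun (congrFun hz (fun _ => i0))
        (Function.update (fun _ => i0) ⟨j, hjlow⟩ i1)
      have hne2 : (fun _ => i0) ≠
          Function.update (fun _ : {s : Fin N // s ∈ lowS N k} => i0) ⟨j, hjlow⟩ i1 := by
        intro h
        have := congrFun h ⟨j, hjlow⟩
        simp [h01] at this
      rw [Matrix.smul_apply, Matrix.one_apply_ne hne2] at this
      simp only [y] at this
      rw [if_pos (by intro s hs; rw [Function.update_of_ne hs])] at this
      simp at this
  intro Y
  let ext' : ({s : Fin N // s ∈ lowS N k} → Fin d) → Fin d →
      ({s : Fin N // s ∈ lowS N (k + 1)} → Fin d) :=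
    fun ρ i s => if h : (s : Fin N) ∈ lowS N k then ρ ⟨s, h⟩ else i
  have hext : ∀ r : Fin N → Fin d, ext' (fun s => r s) (r k) =
      fun s : {s : Fin N // s ∈ lowS N (k + 1)} => r s := by
    intro r
    funext s
    simp only [ext']
    split_ifs with h
    · rfl
    · congr 1
      have := mem_lowS.1 s.2
      rw [mem_lowS] at h
      ext; omega
  have hY : lowE (d := d) (N := N) (k + 1) Y = ∑ i, ∑ i',
      lowE (d := d) (N := N) k (Matrix.of fun ρ σ => Y (ext' ρ i) (ext' σ i')) *
        site k (Matrix.single i i' (1 : ℂ)) := by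
    simp only [low_site_apply, Matrix.of_apply]
    rw [lowE, emb_apply]
    ext r c
    simp only [Matrix.sum_apply, opOn]
    by_cases h : ∀ s, s ∉ lowS N (k + 1) → r s = c s
    · simp only [if_pos h]
      rw [Finset.sum_eq_single (r k), Finset.sum_eq_single (c k)]
      · rw [hext, hext]; simp
      · intro b _ hb; simp [Matrix.single_apply, hb]
      · simp
      · intro b _ hb
        refine Finset.sum_eq_zero fun b' _ => ?_
        simp [Matrix.single_apply, hb]
      · simp
    · simp only [if_neg h]; simp
  rw [hY]
  exact L.sum_mem fun i _ => L.sum_mem fun i' _ => hT _ _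

lemma growth (hd : 2 ≤ d) (hN : 2 ≤ N) (L : Submodule ℂ (Matrix (Fin N → Fin d) (Fin N → Fin d) ℂ))
    (hL : ∀ x ∈ L, ∀ y ∈ L, x * y - y * x ∈ L)
    (hp : ∀ (j k : Fin N) (hjk : (k : ℕ) = j + 1), ∀ W, pairE (d := d) (j, k) (by intro h; simp only at h; omega) W ∈ L) :
    L = ⊤ := by
  have hk : ∀ k : ℕ, 1 ≤ k → k ≤ N → ∀ y, lowE (d := d) (N := N) k y ∈ L := by
    intro k hk
    induction k, hk using Nat.le_induction with
    | base =>
      intro _ y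
      let s0 : Fin N := ⟨0, by omega⟩
      let s1 : Fin N := ⟨1, by omega⟩
      have e : lowE (d := d) (N := N) 1 y = site s0 (Matrix.of fun i i' => y (fun _ => i) (fun _ => i')) := by
        rw [lowE, site, emb_apply, emb_apply]
        have h1 : lowS N 1 = {s0} := by
          ext s; simp [mem_lowS, s0, Fin.ext_iff]
        have h2 : ∀ r : Fin N → Fin d, (fun s : {s : Fin N // s ∈ lowS N 1} => r s) =
            fun _ => r s0 := by
          intro r
          funext s
          have h3 := mem_lowS.1 s.2
          have h4 : (s : Fin N) = s0 := by
            ext; simp only [s0]; omega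
          rw [h4]
        simp only [h2, Matrix.of_apply]
        ext r c
        simp only [opOn, mem_lowS, Finset.mem_singleton, s0, Fin.ext_iff, Nat.lt_one_iff]
      rw [e]
      have hne : (s0, s1).1 ≠ (s0, s1).2 := by simp [s0, s1]
      rw [← pairE_left (s0, s1) hne]
      exact hp s0 s1 rfl _
    | succ k hk ih =>
      intro hkN
      exact growth_step hd L hL ⟨k - 1, by omega⟩ ⟨k, by omega⟩ (by simp only; omega)
        (hp _ _ (by simp only; omega)) (ih (by omega))
  rw [eq_top_iff]
  intro x _
  have := hk N (by omega) le_rfl (Matrix.of fun ρ σ => x (fun s => ρ ⟨s, mem_lowS.2 s.2⟩)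
    (fun s => σ ⟨s, mem_lowS.2 s.2⟩))
  rw [lowE, emb_apply] at this
  convert this using 1
  ext r c
  simp only [opOn, Matrix.of_apply]
  rw [if_pos]
  intro s hs
  exact absurd (mem_lowS.2 s.2) hs

end EmbPart

section FinalPart
open Kronecker NormedSpace Filter Topology
open scoped Matrix.Norms.L2Operator

variable {d N : ℕ}

/-- the monoid of brick-wall circuits -/
def brickMonoid (d N : ℕ) (G : Set (Matrix (Fin d × Fin d) (Fin d × Fin d) ℂ)) :
    Submonoid (Matrix (Fin N → Fin d) (Fin N → Fin d) ℂ) where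
  carrier := BrickCircuits d N G
  one_mem' := ⟨[], by simp, by simp⟩
  mul_mem' := by
    rintro _ _ ⟨l, hl, rfl⟩ ⟨l', hl', rfl⟩
    refine ⟨l ++ l', ?_, by simp⟩
    intro A hA
    rcases List.mem_append.1 hA with h | h
    · exact hl A h
    · exact hl' A h

lemma brick_closure_top (hd : 2 ≤ d) (hN : 2 ≤ N)
    {G V : Set (Matrix (Fin d × Fin d) (Fin d × Fin d) ℂ)}
    (hne : G.Nonempty) (hV : IsOpen V) (hG : G = DualUnitary d ∩ V)
    (H : Submonoid (Matrix (Fin N → Fin d) (Fin N → Fin d) ℂ))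
    (hc : IsClosed (H : Set (Matrix (Fin N → Fin d) (Fin N → Fin d) ℂ)))
    (hu : ∀ h ∈ H, h ∈ unitary (Matrix (Fin N → Fin d) (Fin N → Fin d) ℂ))
    (hs : ∀ h ∈ H, star h ∈ H)
    (hlay : ∀ P, P = evenPairs N ∨ P = oddPairs N → ∀ u : Fin N × Fin N → _,
      (∀ p ∈ P, u p ∈ G) → layerMatrix d N P u ∈ H) :
    lieC H hc = ⊤ := by
  have hGu : ∀ g ∈ G, g ∈ unitary (Matrix (Fin d × Fin d) (Fin d × Fin d) ℂ) := by
    intro g hg; rw [hG] at hg; exact hg.1.1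
  obtain ⟨g0, hg0⟩ := hne
  have hg0' : g0 ∈ DualUnitary d ∩ V := hG ▸ hg0
  refine growth hd hN _ (fun x hx y hy => lieC_bracket hc hu hs hx hy) ?_
  intro j k hjk
  have hne' : (j, k).1 ≠ (j, k).2 := by intro h; simp only at h; omega
  obtain ⟨P, hPeo, hP, hpP⟩ : ∃ P, (P = evenPairs N ∨ P = oddPairs N) ∧ PairDisj P ∧ (j, k) ∈ P := by
    rcases Nat.mod_two_eq_zero_or_one j with h | h
    · exact ⟨_, Or.inl rfl, pairDisj_even, by simp [evenPairs, h, hjk]⟩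
    · exact ⟨_, Or.inr rfl, pairDisj_odd, by simp [oddPairs, h, hjk]⟩
  -- translations
  have htrans : ∀ v, v * g0 ∈ G → pairE (j, k) hne' v ∈ H := by
    intro v hv
    have h1 : layerMatrix d N P (Function.update (fun _ => g0) (j, k) (v * g0)) ∈ H := by
      refine hlay P hPeo _ fun q hq => ?_
      by_cases h : q = (j, k)
      · rw [h, Function.update_self]; exact hv
      · rw [Function.update_of_ne h]; exact hg0
    have h2 : layerMatrix d N P (fun _ => g0) ∈ H := hlay P hPeo _ fun q hq => hg0
    have h3 : layerMatrix d N P (Function.update (fun _ => g0) (j, k) (v * g0)) =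
        pairE (j, k) hne' v * layerMatrix d N P (fun _ => g0) := by
      rw [layer_erase hP hpP, layer_erase hP hpP, Function.update_self, map_mul, mul_assoc]
      congr 2
      rw [layer_eq, layer_eq]
      congr 1
      funext r c
      refine Finset.prod_congr rfl fun q hq => ?_
      rw [Function.update_of_ne (Finset.ne_of_mem_erase hq)]
    have h4 := H.mul_mem h1 (hs _ h2)
    rwa [h3, mul_assoc, (Unitary.mem_iff.1 (hu _ h2)).2, mul_one] at h4
  -- conjugation
  have hconj : ∀ g ∈ G, ∀ W, pairE (j, k) hne' W ∈ lieC H hc →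
      pairE (j, k) hne' (g * W * star g) ∈ lieC H hc := by
    intro g hg W hW
    have h2 : layerMatrix d N P (fun _ => g) ∈ H := hlay P hPeo _ fun q hq => hg
    have h3 := lieC_conj hc hu hs hW h2
    have h4 : layerMatrix d N (P.erase (j, k)) (fun _ => g) ∈ unitary _ :=
      layer_unitary _ _ rfl (hP.erase _) _ (fun q _ => hGu g hg)
    rw [layer_erase hP hpP, star_mul] at h3
    have h5 : pairE (j, k) hne' g * layerMatrix d N (P.erase (j, k)) (fun _ => g) *
        pairE (j, k) hne' W * (star (layerMatrix d N (P.erase (j, k)) (fun _ => g)) *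
          star (pairE (j, k) hne' g)) = pairE (j, k) hne' (g * W * star g) := by
      rw [mul_assoc (pairE (j, k) hne' g), ← layer_comm hP hpP, map_mul, map_mul, map_star]
      calc _ = pairE (j, k) hne' g * pairE (j, k) hne' W *
            (layerMatrix d N (P.erase (j, k)) (fun _ => g) *
              star (layerMatrix d N (P.erase (j, k)) (fun _ => g))) *
            star (pairE (j, k) hne' g) := by simp only [mul_assoc]
        _ = _ := by rw [(Unitary.mem_iff.1 h4).2, mul_one]
    rwa [h5] at h3
  -- local generators
  have hexp : ∀ (s : Fin N) (X : Matrix (Fin d) (Fin d) ℂ) (t : ℝ),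
      site (N := N) s (exp (t • X)) = exp (t • site s X) := by
    intro s X t
    have hcont : Continuous (site (d := d) (N := N) s) :=
      (site (d := d) (N := N) s).toAlgHom.toLinearMap.continuous_of_finiteDimensional
    let _i := NormedAlgebra.restrictScalars ℚ ℂ (Matrix (Fin d) (Fin d) ℂ)
    have := NormedSpace.map_exp (site (d := d) (N := N) s) hcont (t • X)
    rw [this]
    congr 1
    rw [← Complex.coe_smul, ← Complex.coe_smul, map_smul]
  have hlimV : ∀ F : Matrix (Fin d) (Fin d) ℂ → Matrix (Fin d × Fin d) (Fin d × Fin d) ℂ,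
      Continuous F → F 1 = 1 → ∀ X : Matrix (Fin d) (Fin d) ℂ,
      ∀ᶠ t : ℝ in 𝓝 0, F (exp (t • X)) * g0 ∈ V := by
    intro F hF hF1 X
    have hcont : Continuous fun t : ℝ => F (exp (t • X)) * g0 := by
      let _i := NormedAlgebra.restrictScalars ℚ ℂ (Matrix (Fin d) (Fin d) ℂ)
      have : Continuous fun t : ℝ => exp (t • X) :=
        NormedSpace.exp_continuous.comp (continuous_id.smul continuous_const)
      exact (hF.comp this).mul continuous_const
    refine hcont.continuousAt.preimage_mem_nhds ?_
    simp only [zero_smul, exp_zero, hF1, one_mul]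
    exact hV.mem_nhds hg0'.2
  have hleft : ∀ a : Matrix (Fin d) (Fin d) ℂ, site j a ∈ lieC H hc := by
    refine mem_lieC_of_skew hc (site j).toAlgHom.toLinearMap ?_
    intro X hX
    refine mem_lieSet_of_eventually ?_ ?_
    · change star (site j X) = - site j X
      rw [← map_star, hX, map_neg]
    · have hF : Continuous fun x : Matrix (Fin d) (Fin d) ℂ => x ⊗ₖ (1 : Matrix (Fin d) (Fin d) ℂ) :=
        continuous_matrix fun i j' => by
          simp only [Matrix.kroneckerMap_apply]; fun_prop
      filter_upwards [hlimV _ hF (Matrix.one_kronecker_one) X] with t ht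
      have : pairE (j, k) hne' (exp (t • X) ⊗ₖ (1 : Matrix (Fin d) (Fin d) ℂ)) ∈ H := by
        refine htrans _ ?_
        rw [hG]
        exact ⟨dual_left (exp_skew_unitary (skew_smul hX t)) hg0'.1, ht⟩
      rw [pairE_left, hexp] at this
      exact this
  have hright : ∀ a : Matrix (Fin d) (Fin d) ℂ, site k a ∈ lieC H hc := by
    refine mem_lieC_of_skew hc (site k).toAlgHom.toLinearMap ?_
    intro X hX
    refine mem_lieSet_of_eventually ?_ ?_
    · change star (site k X) = - site k X
      rw [← map_star, hX, map_neg]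
    · have hF : Continuous fun x : Matrix (Fin d) (Fin d) ℂ => (1 : Matrix (Fin d) (Fin d) ℂ) ⊗ₖ x :=
        continuous_matrix fun i j' => by
          simp only [Matrix.kroneckerMap_apply]; fun_prop
      filter_upwards [hlimV _ hF (Matrix.one_kronecker_one) X] with t ht
      have : pairE (j, k) hne' ((1 : Matrix (Fin d) (Fin d) ℂ) ⊗ₖ exp (t • X)) ∈ H := by
        refine htrans _ ?_
        rw [hG]
        exact ⟨dual_right (exp_skew_unitary (skew_smul hX t)) hg0'.1, ht⟩
      rw [pairE_right, hexp] at this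
      exact this
  have htop := gate_top hd ⟨g0, hg0⟩ hV hG
    ((lieC H hc).comap (pairE (d := d) (j, k) hne').toAlgHom.toLinearMap)
    (by
      intro x hx y hy
      change pairE (j, k) hne' _ ∈ lieC H hc
      rw [map_sub, map_mul, map_mul]
      exact lieC_bracket hc hu hs hx hy)
    (by
      intro a
      change pairE (j, k) hne' _ ∈ lieC H hc
      rw [pairE_left]; exact hleft a)
    (by
      intro a
      change pairE (j, k) hne' _ ∈ lieC H hc
      rw [pairE_right]; exact hright a)
    (fun g hg W hW => hconj g hg W hW)
  intro W
  have : W ∈ (lieC H hc).comap (pairE (d := d) (j, k) hne').toAlgHom.toLinearMap := by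
    rw [htop]; trivial
  exact this

lemma universal_aux (hd : 2 ≤ d) (hN : 2 ≤ N)
    {G V : Set (Matrix (Fin d × Fin d) (Fin d × Fin d) ℂ)}
    (hne : G.Nonempty) (hV : IsOpen V) (hG : G = DualUnitary d ∩ V) :
    ∀ M ∈ unitary (Matrix (Fin N → Fin d) (Fin N → Fin d) ℂ),
      M ∈ closure (BrickCircuits d N G) := by
  have hGu : ∀ g ∈ G, g ∈ unitary (Matrix (Fin d × Fin d) (Fin d × Fin d) ℂ) := by
    intro g hg; rw [hG] at hg; exact hg.1.1
  let H := (brickMonoid d N G).topologicalClosure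
  have hc : IsClosed (H : Set (Matrix (Fin N → Fin d) (Fin N → Fin d) ℂ)) :=
    Submonoid.isClosed_topologicalClosure _
  have hsub : ∀ h ∈ brickMonoid d N G, h ∈ unitary (Matrix (Fin N → Fin d) (Fin N → Fin d) ℂ) := by
    rintro _ ⟨l, hl, rfl⟩
    refine list_prod_mem fun A hA => ?_
    obtain ⟨u, ⟨h1, rfl⟩ | ⟨h1, rfl⟩⟩ := hl A hA
    · exact layer_unitary _ _ rfl pairDisj_even u fun p hp => hGu _ (h1 p hp)
    · exact layer_unitary _ _ rfl pairDisj_odd u fun p hp => hGu _ (h1 p hp)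
  have hu : ∀ h ∈ H, h ∈ unitary (Matrix (Fin N → Fin d) (Fin N → Fin d) ℂ) :=
    fun h hh => closure_minimal (fun x hx => hsub x hx) isClosed_unitary hh
  have hs : ∀ h ∈ H, star h ∈ H := fun h hh => star_mem_of_closed hc hu hh
  have hlay : ∀ P, P = evenPairs N ∨ P = oddPairs N → ∀ u : Fin N × Fin N → _,
      (∀ p ∈ P, u p ∈ G) → layerMatrix d N P u ∈ H := by
    rintro P hP u hu
    refine (brickMonoid d N G).le_topologicalClosure ?_
    refine ⟨[layerMatrix d N P u], ?_, by simp⟩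
    intro A hA
    rw [List.mem_singleton] at hA
    rcases hP with rfl | rfl
    · exact ⟨u, Or.inl ⟨hu, hA⟩⟩
    · exact ⟨u, Or.inr ⟨hu, hA⟩⟩
  have htop := brick_closure_top hd hN hne hV hG H hc hu hs hlay
  intro M hM
  obtain ⟨X, hX, rfl⟩ := unitary_eq_exp hM
  have h1 := (lieSet_of_lieC_top hc htop hX).2 1
  rw [one_smul] at h1
  exact h1

end FinalPart

/-- Any nonempty relatively open subset `G` of the dual-unitary gates `DU(d²)` is brick-wall
universal: brick-wall circuits on `N ≥ 2` qudits with gates from `G` are dense in `U(d^N)`. -/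
theorem dualUnitary_brickwall_universal (d N : ℕ) (hd : 2 ≤ d) (hN : 2 ≤ N)
    (G : Set (Matrix (Fin d × Fin d) (Fin d × Fin d) ℂ))
    (hne : G.Nonempty) (hsub : G ⊆ DualUnitary d)
    (hopen : ∃ V : Set (Matrix (Fin d × Fin d) (Fin d × Fin d) ℂ),
        IsOpen V ∧ G = DualUnitary d ∩ V) :
    ∀ M ∈ unitary (Matrix (Fin N → Fin d) (Fin N → Fin d) ℂ),
      M ∈ closure (BrickCircuits d N G) := by
  obtain ⟨V, hV, hG⟩ := hopen
  exact universal_aux hd hN hne hV hG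
end
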